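/- (Interior a priori bound.) There exist ε > 0 and C > 0 such that the following holds. Let U, V : [1,∞) × ℝ → ℂ be a smooth solution of the transformed Thirring system with U(ρ,·), V(ρ,·) Schwartz in y locally uniformly in ρ. Define 𝓔_int(ρ) = Σ_{k=0}^{3} ( ‖∂_y^k U(ρ,·)‖_{L²(ℝ)} + ‖∂_y^k V(ρ,·)‖_{L²(ℝ)} ) and M(ρ) = sup_{y ∈ ℝ} ( |U(ρ,y)|² + |V(ρ,y)|² )^{1/2}. If 𝓔_int(1) ≤ ε, then sup_{ρ ≥ 1} M(ρ) ≤ C 𝓔_int(1). -/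

import Mathlib

noncomputable section
open MeasureTheory

/-- Partial derivative in the first (ρ) variable. -/
def pρ (u : ℝ → ℝ → ℂ) : ℝ → ℝ → ℂ := fun ρ y => deriv (fun s => u s y) ρ
/-- Partial derivative in the second (y) variable. -/
def py (u : ℝ → ℝ → ℂ) : ℝ → ℝ → ℂ := fun ρ y => deriv (fun z => u ρ z) y

/-- The transformed Thirring system on [1,∞) × ℝ (coordinates (ρ,y)):
∂_ρ U + ρ⁻¹ ∂_y U = iV + iρ⁻¹|V|²U, ∂_ρ V - ρ⁻¹ ∂_y V = iU + iρ⁻¹|U|²V. -/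
def TransThirring (U V : ℝ → ℝ → ℂ) : Prop :=
  ∀ ρ y : ℝ, 1 ≤ ρ →
    pρ U ρ y + ((ρ⁻¹ : ℝ) : ℂ) * py U ρ y =
      Complex.I * V ρ y + Complex.I * ((ρ⁻¹ : ℝ) : ℂ) * (‖V ρ y‖ ^ 2 : ℝ) * U ρ y ∧
    pρ V ρ y - ((ρ⁻¹ : ℝ) : ℂ) * py V ρ y =
      Complex.I * U ρ y + Complex.I * ((ρ⁻¹ : ℝ) : ℂ) * (‖U ρ y‖ ^ 2 : ℝ) * V ρ y

/-- The interior energy 𝓔_int(ρ) = Σ_{k=0}^3 (‖∂_y^k U(ρ,·)‖_{L²} + ‖∂_y^k V(ρ,·)‖_{L²}). -/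
def Eint (U V : ℝ → ℝ → ℂ) (ρ : ℝ) : ℝ :=
  ∑ k ∈ Finset.range 4,
    (Real.sqrt (∫ y : ℝ, ‖deriv^[k] (U ρ) y‖ ^ 2) +
     Real.sqrt (∫ y : ℝ, ‖deriv^[k] (V ρ) y‖ ^ 2))

/-- M(ρ) = sup_y (|U(ρ,y)|² + |V(ρ,y)|²)^{1/2}. -/
def Mfun (U V : ℝ → ℝ → ℂ) (ρ : ℝ) : ℝ :=
  ⨆ y : ℝ, Real.sqrt (‖U ρ y‖ ^ 2 + ‖V ρ y‖ ^ 2)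

/-- U and all its derivatives are Schwartz in y, locally uniformly in ρ. -/
def SchwartzLocUnif (u : ℝ → ℝ → ℂ) : Prop :=
  ∀ (a b n : ℕ) (A : ℝ), ∃ C : ℝ, ∀ ρ ∈ Set.Icc (1 : ℝ) A, ∀ y : ℝ,
    |y| ^ n * ‖pρ^[a] (py^[b] u) ρ y‖ ≤ C

/-!
Write the system as `∂_ρ Φ = ρ⁻¹ A ∂_y Φ + J Φ + ρ⁻¹ N(Φ, Φ, Φ)` for `Φ = (U, V)`. Because `A` is
symmetric and `J` is skew, only the cubic term contributes to the evolution of the `L²` norms of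
`∂_y^k Φ`. As long as `‖Φ‖²` stays below a small constant, they therefore grow at most like a small
power of `ρ`; for `k = 2` and `k = 3` this uses `∫ ‖∂_y Φ‖⁴ ≲ sup ‖Φ‖² ∫ ‖∂_y² Φ‖²` and the Sobolev
embedding.

In the evolution of the density `‖Φ‖²` the mass and cubic terms cancel, but the transport term
`2 ρ⁻¹ ⟪Φ, A ∂_y Φ⟫` is not integrable in `ρ`. Since `-2 A` is the commutator of some matrix `B`
with `J`, adding `ρ⁻¹ ⟪Φ, B ∂_y Φ⟫` to the density removes it. The corrected density then changes
at the rate `ρ⁻² ρ^{1/2}`, which is integrable, and stays bounded by its initial size. A continuity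
argument removes the smallness assumption on `‖Φ‖²`.
-/

section LineEstimates

open Filter Set
open scoped RealInnerProductSpace

variable {E : Type*} [NormedAddCommGroup E] [InnerProductSpace ℝ E] {f f' f'' : ℝ → E}

lemma memLp_two_of_decay {F : Type*} [NormedAddCommGroup F] {f : ℝ → F} (hf : Continuous f)
    {C : ℝ} (hC : ∀ y, (1 + y ^ 2) * ‖f y‖ ≤ C) : MemLp f 2 := by
  refine (memLp_two_iff_integrable_sq_norm hf.aestronglyMeasurable).2 <|
    (integrable_inv_one_add_sq.const_mul (C ^ 2)).mono'
      (hf.norm.pow 2).aestronglyMeasurable (ae_of_all _ fun y ↦ ?_)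
  have hy : 1 ≤ 1 + y ^ 2 := by nlinarith [sq_nonneg y]
  rw [Real.norm_of_nonneg (by positivity), ← div_eq_mul_inv, le_div_iff₀ (by positivity)]
  calc ‖f y‖ ^ 2 * (1 + y ^ 2) ≤ ‖f y‖ ^ 2 * (1 + y ^ 2) ^ 2 := by
        gcongr; exact le_self_pow₀ hy two_ne_zero
    _ = ((1 + y ^ 2) * ‖f y‖) ^ 2 := by ring
    _ ≤ C ^ 2 := by gcongr; exact hC y

lemma integrable_inner_of_memLp_two {f g : ℝ → E} (hf : MemLp f 2) (hg : MemLp g 2) :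
    Integrable fun y ↦ ⟪f y, g y⟫ :=
  (hf.norm.integrable_mul hg.norm).mono'
    (hf.aestronglyMeasurable.inner hg.aestronglyMeasurable)
    (ae_of_all _ fun y ↦ norm_inner_le_norm (f y) (g y))

lemma norm_sq_le_integral_add_integral (hf : ∀ y, HasDerivAt f (f' y) y)
    (hf2 : MemLp f 2) (hf2' : MemLp f' 2) (y : ℝ) :
    ‖f y‖ ^ 2 ≤ (∫ x, ‖f x‖ ^ 2) + ∫ x, ‖f' x‖ ^ 2 := by
  have hderiv (x : ℝ) : HasDerivAt (fun x ↦ ‖f x‖ ^ 2) (2 * ⟪f x, f' x⟫) x := (hf x).norm_sq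
  have hint : Integrable fun x ↦ 2 * ⟪f x, f' x⟫ :=
    (integrable_inner_of_memLp_two hf2 hf2').const_mul 2
  have hsq := hf2.integrable_norm_pow two_ne_zero
  have hsq' := hf2'.integrable_norm_pow two_ne_zero
  have hlim : Tendsto (fun x ↦ ‖f x‖ ^ 2) atBot (nhds 0) :=
    tendsto_zero_of_hasDerivAt_of_integrableOn_Iic (a := y) (fun x _ ↦ hderiv x)
      hint.integrableOn hsq.integrableOn
  have hftc : ∫ x in Iic y, 2 * ⟪f x, f' x⟫ = ‖f y‖ ^ 2 := by
    simpa using integral_Iic_of_hasDerivAt_of_tendsto' (fun x _ ↦ hderiv x)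
      hint.integrableOn hlim
  have hle (x : ℝ) : 2 * ⟪f x, f' x⟫ ≤ ‖f x‖ ^ 2 + ‖f' x‖ ^ 2 := by
    nlinarith [real_inner_le_norm (f x) (f' x), sq_nonneg (‖f x‖ - ‖f' x‖)]
  calc ‖f y‖ ^ 2 = ∫ x in Iic y, 2 * ⟪f x, f' x⟫ := hftc.symm
    _ ≤ ∫ x in Iic y, ‖f x‖ ^ 2 + ‖f' x‖ ^ 2 :=
        setIntegral_mono hint.integrableOn (hsq.add hsq').integrableOn hle
    _ ≤ ∫ x, ‖f x‖ ^ 2 + ‖f' x‖ ^ 2 :=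
        setIntegral_le_integral (hsq.add hsq') (ae_of_all _ fun x ↦ by positivity)
    _ = _ := integral_add hsq hsq'

lemma exists_norm_le_of_memLp_two (hf : ∀ y, HasDerivAt f (f' y) y)
    (hf2 : MemLp f 2) (hf2' : MemLp f' 2) : ∃ M, ∀ y, ‖f y‖ ≤ M :=
  ⟨_, fun y ↦
    Real.le_sqrt_of_sq_le (norm_sq_le_integral_add_integral hf hf2 hf2' y)⟩

lemma integrable_norm_pow_four_of_memLp_two (hf : ∀ y, HasDerivAt f (f' y) y)
    (hf2 : MemLp f 2) (hf2' : MemLp f' 2) : Integrable fun y ↦ ‖f y‖ ^ 4 := by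
  obtain ⟨M, hM⟩ := exists_norm_le_of_memLp_two hf hf2 hf2'
  refine ((hf2.integrable_norm_pow two_ne_zero).const_mul (M ^ 2)).mono'
    (hf2.aestronglyMeasurable.norm.pow 4) (ae_of_all _ fun y ↦ ?_)
  rw [Real.norm_of_nonneg (by positivity)]
  calc ‖f y‖ ^ 4 = ‖f y‖ ^ 2 * ‖f y‖ ^ 2 := by ring
    _ ≤ M ^ 2 * ‖f y‖ ^ 2 := by gcongr; exact hM y

lemma abs_gagliardoNirenberg_flux_sub_le {x y z : E} {N : ℝ} (hx : ‖x‖ ≤ N) :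
    |2 * ⟪y, z⟫ * ⟪x, y⟫ + ‖y‖ ^ 2 * (⟪x, z⟫ + ⟪y, y⟫) - ‖y‖ ^ 4| ≤
      3 * N * (‖y‖ ^ 2 * ‖z‖) := by
  have hxy : |⟪x, y⟫| ≤ N * ‖y‖ := (abs_real_inner_le_norm x y).trans (by gcongr)
  have hxz : |⟪x, z⟫| ≤ N * ‖z‖ := (abs_real_inner_le_norm x z).trans (by gcongr)
  calc |2 * ⟪y, z⟫ * ⟪x, y⟫ + ‖y‖ ^ 2 * (⟪x, z⟫ + ⟪y, y⟫) - ‖y‖ ^ 4|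
      = |2 * (⟪y, z⟫ * ⟪x, y⟫) + ‖y‖ ^ 2 * ⟪x, z⟫| := by
        rw [real_inner_self_eq_norm_sq]; ring_nf
    _ ≤ 2 * (|⟪y, z⟫| * |⟪x, y⟫|) + ‖y‖ ^ 2 * |⟪x, z⟫| := by
        refine (abs_add_le _ _).trans_eq ?_
        simp only [abs_mul, abs_two, abs_pow, abs_norm]
    _ ≤ 2 * (‖y‖ * ‖z‖ * (N * ‖y‖)) + ‖y‖ ^ 2 * (N * ‖z‖) := by
        gcongr; exact abs_real_inner_le_norm y z
    _ = 3 * N * (‖y‖ ^ 2 * ‖z‖) := by ring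

lemma integrable_gagliardoNirenberg_flux {N : ℝ} (hf : Continuous f)
    (hf' : ∀ y, HasDerivAt f' (f'' y) y) (hf2' : MemLp f' 2) (hf2'' : MemLp f'' 2)
    (hN : ∀ y, ‖f y‖ ≤ N) :
    Integrable fun y ↦
      2 * ⟪f' y, f'' y⟫ * ⟪f y, f' y⟫ + ‖f' y‖ ^ 2 * (⟪f y, f'' y⟫ + ⟪f' y, f' y⟫) := by
  obtain ⟨M, hM⟩ := exists_norm_le_of_memLp_two hf' hf2' hf2''
  have hN0 : 0 ≤ N := (norm_nonneg _).trans (hN 0)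
  have hmeas := hf.aestronglyMeasurable (μ := volume)
  have hmeas' := hf2'.aestronglyMeasurable
  have hmeas'' := hf2''.aestronglyMeasurable
  have hprod := (hf2'.norm.integrable_mul hf2''.norm).const_mul (3 * N * M)
  refine ((integrable_norm_pow_four_of_memLp_two hf' hf2' hf2'').add hprod).mono'
    (by fun_prop) (ae_of_all _ fun y ↦ ?_)
  have hflux := abs_gagliardoNirenberg_flux_sub_le (y := f' y) (z := f'' y) (hN y)
  have hfour : |‖f' y‖ ^ 4| = ‖f' y‖ ^ 4 := abs_of_nonneg (by positivity)
  refine (sub_le_iff_le_add'.1 ((abs_sub_abs_le_abs_sub _ _).trans hflux)).trans ?_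
  calc |‖f' y‖ ^ 4| + 3 * N * (‖f' y‖ ^ 2 * ‖f'' y‖)
      = ‖f' y‖ ^ 4 + 3 * N * ‖f' y‖ * (‖f' y‖ * ‖f'' y‖) := by rw [hfour]; ring
    _ ≤ ‖f' y‖ ^ 4 + 3 * N * M * (‖f' y‖ * ‖f'' y‖) := by gcongr; exact hM y

-- Integrate the derivative of `‖f'‖² ⟪f, f'⟫`, whose leading term is `‖f'‖⁴`.
lemma integral_norm_deriv_pow_four_le {K : ℝ} (hf : ∀ y, HasDerivAt f (f' y) y)
    (hf' : ∀ y, HasDerivAt f' (f'' y) y) (hf2' : MemLp f' 2) (hf2'' : MemLp f'' 2)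
    (hK : ∀ y, ‖f y‖ ^ 2 ≤ K) :
    ∫ y, ‖f' y‖ ^ 4 ≤ 9 * K * ∫ y, ‖f'' y‖ ^ 2 := by
  obtain ⟨M, hM⟩ := exists_norm_le_of_memLp_two hf' hf2' hf2''
  set N : ℝ := Real.sqrt K
  have hfN (y : ℝ) : ‖f y‖ ≤ N := Real.le_sqrt_of_sq_le (hK y)
  have hN : N ^ 2 = K := Real.sq_sqrt ((sq_nonneg _).trans (hK 0))
  have hcont : Continuous f := continuous_iff_continuousAt.2 fun y ↦ (hf y).continuousAt
  have hfour := integrable_norm_pow_four_of_memLp_two hf' hf2' hf2''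
  have hsq := (hf2''.integrable_norm_pow two_ne_zero).const_mul (9 * K)
  set w : ℝ → ℝ := fun y ↦
    2 * ⟪f' y, f'' y⟫ * ⟪f y, f' y⟫ + ‖f' y‖ ^ 2 * (⟪f y, f'' y⟫ + ⟪f' y, f' y⟫)
  have hw_abs (y : ℝ) : |w y - ‖f' y‖ ^ 4| ≤ 3 * N * (‖f' y‖ ^ 2 * ‖f'' y‖) :=
    abs_gagliardoNirenberg_flux_sub_le (hfN y)
  have hderiv (y : ℝ) : HasDerivAt (fun y ↦ ‖f' y‖ ^ 2 * ⟪f y, f' y⟫) (w y) y :=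
    (hf' y).norm_sq.mul ((hf y).inner ℝ (hf' y))
  have hflux : Integrable fun y ↦ ‖f' y‖ ^ 2 * ⟪f y, f' y⟫ := by
    refine (hf2'.integrable_norm_pow two_ne_zero).mul_bdd (c := N * M)
      (hcont.aestronglyMeasurable.inner hf2'.aestronglyMeasurable) (ae_of_all _ fun y ↦ ?_)
    exact (norm_inner_le_norm _ _).trans (by gcongr; exacts [hfN y, hM y])
  have hw : Integrable w := integrable_gagliardoNirenberg_flux hcont hf' hf2' hf2'' hfN
  have hpoint (y : ℝ) : ‖f' y‖ ^ 4 ≤ 9 * K * ‖f'' y‖ ^ 2 + 2 * w y := by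
    nlinarith [neg_le_of_abs_le (hw_abs y), sq_nonneg (‖f' y‖ ^ 2 - 3 * N * ‖f'' y‖)]
  calc ∫ y, ‖f' y‖ ^ 4 ≤ ∫ y, 9 * K * ‖f'' y‖ ^ 2 + 2 * w y :=
        integral_mono hfour (hsq.add (hw.const_mul 2)) hpoint
    _ = 9 * K * ∫ y, ‖f'' y‖ ^ 2 := by
        rw [integral_add hsq (hw.const_mul 2), integral_const_mul, integral_const_mul,
          integral_eq_zero_of_hasDerivAt_of_integrable hderiv hw hflux, mul_zero, add_zero]

end LineEstimates

section ScalarInequalities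

open Set

lemma two_mul_mul_le_mul_sq_add_inv_mul_sq {K : ℝ} (hK : 0 < K) (a b : ℝ) :
    2 * a * b ≤ K * a ^ 2 + K⁻¹ * b ^ 2 := by
  have hsq : 0 ≤ K⁻¹ * (K * a - b) ^ 2 := mul_nonneg (inv_nonneg.2 hK.le) (sq_nonneg _)
  have hexpand : K⁻¹ * (K * a - b) ^ 2 = K * a ^ 2 - 2 * a * b + K⁻¹ * b ^ 2 := by
    field_simp
    ring
  linarith

lemma le_of_deriv_le_rpow {G : ℝ → ℝ} {T a b B : ℝ} (hab : a ≠ b)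
    (hc : ContinuousOn G (Icc 1 T)) (hd : ∀ s ∈ Ioo 1 T, DifferentiableAt ℝ G s)
    (hG : ∀ s ∈ Ioo 1 T, deriv G s ≤ s⁻¹ * (a * G s + B * s ^ b)) {t : ℝ} (ht : t ∈ Icc 1 T) :
    G t ≤ G 1 * t ^ a + B / (b - a) * (t ^ b - t ^ a) := by
  set H : ℝ → ℝ := fun s ↦ G s * s ^ (-a) - B / (b - a) * s ^ (b - a)
  have hderiv {s : ℝ} (hs : s ∈ Ioo 1 T) :
      HasDerivAt H (deriv G s * s ^ (-a) + G s * (-a * s ^ (-a - 1)) -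
        B / (b - a) * ((b - a) * s ^ (b - a - 1))) s := by
    have hs0 : s ≠ 0 := (zero_lt_one.trans hs.1).ne'
    exact ((hd s hs).hasDerivAt.mul (Real.hasDerivAt_rpow_const (.inl hs0))).sub
      ((Real.hasDerivAt_rpow_const (.inl hs0)).const_mul _)
  have hanti : AntitoneOn H (Icc 1 T) := by
    refine antitoneOn_of_deriv_nonpos (convex_Icc 1 T) ?_ ?_ fun s hs ↦ ?_
    · have hne : ∀ s ∈ Icc 1 T, s ≠ 0 := fun s hs ↦ (zero_lt_one.trans_le hs.1).ne'
      exact (hc.mul (continuousOn_id.rpow_const fun s hs ↦ .inl (hne s hs))).sub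
        (continuousOn_const.mul (continuousOn_id.rpow_const fun s hs ↦ .inl (hne s hs)))
    · rw [interior_Icc]
      exact fun s hs ↦ (hderiv hs).differentiableAt.differentiableWithinAt
    rw [interior_Icc] at hs
    have hs0 : 0 < s := zero_lt_one.trans hs.1
    rw [(hderiv hs).deriv, ← mul_assoc (B / (b - a)), div_mul_cancel₀ _ (sub_ne_zero.2 hab.symm),
      Real.rpow_sub_one hs0.ne', Real.rpow_sub_one hs0.ne', sub_eq_add_neg b, Real.rpow_add hs0]
    calc _ = (deriv G s - s⁻¹ * (a * G s + B * s ^ b)) * s ^ (-a) := by ring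
      _ ≤ 0 := mul_nonpos_of_nonpos_of_nonneg (sub_nonpos.2 (hG s hs)) (by positivity)
  have ht0 : 0 < t := zero_lt_one.trans_le ht.1
  have hle : H t ≤ H 1 := hanti ⟨le_rfl, ht.1.trans ht.2⟩ ht ht.1
  calc G t = (H t + B / (b - a) * t ^ (b - a)) * t ^ a := by
        simp only [H, sub_add_cancel, mul_assoc, Real.rpow_neg ht0.le,
          inv_mul_cancel₀ (Real.rpow_pos_of_pos ht0 a).ne', mul_one]
    _ ≤ (H 1 + B / (b - a) * t ^ (b - a)) * t ^ a := by gcongr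
    _ = _ := by
        simp only [H, Real.one_rpow, Real.rpow_sub ht0]
        field_simp
        ring

lemma forall_le_of_bootstrap {ι : Type*} {f : ℝ → ι → ℝ} {a T K K' L : ℝ} (hK : K' < K)
    (hL : 0 < L)
    (hlip : ∀ s t, a ≤ s → s ≤ t → t ≤ T → ∀ i, f t i - f s i ≤ L * (t - s))
    (hinit : ∀ i, f a i ≤ K')
    (hstep : ∀ t ∈ Icc a T, (∀ s ∈ Icc a t, ∀ i, f s i ≤ K) → ∀ i, f t i ≤ K')
    {t : ℝ} (ht : t ∈ Icc a T) (i : ι) : f t i ≤ K' := by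
  set δ : ℝ := (K - K') / L
  have hδ : 0 < δ := div_pos (sub_pos.2 hK) hL
  have hstep_len (n : ℕ) : ∀ t ∈ Icc a T, t ≤ a + n * δ → ∀ i, f t i ≤ K' := by
    induction n with
    | zero =>
      intro t ht htn
      obtain rfl : t = a := le_antisymm (by simpa using htn) ht.1
      exact hinit
    | succ n ih =>
      refine fun t ht htn ↦ hstep t ht fun s hs i ↦ ?_
      set b : ℝ := max a (s - δ)
      have hbs : b ≤ s := max_le hs.1 (by linarith)
      have hb : f b i ≤ K' :=
        ih b ⟨le_max_left _ _, hbs.trans (hs.2.trans ht.2)⟩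
          (max_le (by simpa using by positivity) (by push_cast at htn; linarith [hs.2])) i
      have hlen : L * (s - b) ≤ K - K' :=
        calc L * (s - b) ≤ L * δ := by gcongr; linarith [le_max_right a (s - δ)]
          _ = K - K' := mul_div_cancel₀ _ hL.ne'
      linarith [hlip b s (le_max_left _ _) hbs (hs.2.trans ht.2) i]
  obtain ⟨n, hn⟩ := exists_nat_ge ((t - a) / δ)
  exact hstep_len n t ht (by linarith [(div_le_iff₀ hδ).1 hn]) i

end ScalarInequalities

section ParametricEnergy

open Set
open scoped RealInnerProductSpace

variable {E : Type*} [NormedAddCommGroup E]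

lemma norm_le_of_decay {f : ℝ → E} {C : ℝ} (hC : ∀ y, (1 + y ^ 2) * ‖f y‖ ≤ C) (y : ℝ) :
    ‖f y‖ ≤ C :=
  (le_mul_of_one_le_left (norm_nonneg _) (le_add_of_nonneg_right (sq_nonneg y))).trans (hC y)

lemma continuousOn_integral_norm_sq_of_decay {g : ℝ → ℝ → E} {S : Set ℝ} {C : ℝ}
    (hg : ∀ s ∈ S, Continuous (g s)) (hgS : ∀ y, ContinuousOn (g · y) S)
    (hC : ∀ s ∈ S, ∀ y, (1 + y ^ 2) * ‖g s y‖ ≤ C) :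
    ContinuousOn (fun s ↦ ∫ y, ‖g s y‖ ^ 2) S := by
  refine continuousOn_of_dominated (bound := fun y ↦ C ^ 2 * (1 + y ^ 2)⁻¹)
    (fun s hs ↦ ((hg s hs).norm.pow 2).aestronglyMeasurable)
    (fun s hs ↦ ae_of_all _ fun y ↦ ?_) (integrable_inv_one_add_sq.const_mul _)
    (ae_of_all _ fun y ↦ (hgS y).norm.pow 2)
  have hgC : ‖g s y‖ ≤ C := norm_le_of_decay (hC s hs) y
  have hC0 : 0 ≤ C := (norm_nonneg _).trans hgC
  rw [Real.norm_of_nonneg (by positivity), ← div_eq_mul_inv, le_div_iff₀ (by positivity)]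
  calc ‖g s y‖ ^ 2 * (1 + y ^ 2) = ‖g s y‖ * ((1 + y ^ 2) * ‖g s y‖) := by ring
    _ ≤ C * C := by gcongr; exact hC s hs y
    _ = C ^ 2 := (sq C).symm

lemma hasDerivAt_integral_norm_sq_of_decay [InnerProductSpace ℝ E] {g g' : ℝ → ℝ → E}
    {S : Set ℝ} {ρ C D : ℝ} (hS : S ∈ nhds ρ) (hg : ∀ s ∈ S, Continuous (g s))
    (hg' : Continuous (g' ρ)) (hd : ∀ s ∈ S, ∀ y, HasDerivAt (g · y) (g' s y) s)
    (hC : ∀ s ∈ S, ∀ y, (1 + y ^ 2) * ‖g s y‖ ≤ C) (hD : ∀ s ∈ S, ∀ y, ‖g' s y‖ ≤ D) :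
    HasDerivAt (fun s ↦ ∫ y, ‖g s y‖ ^ 2) (∫ y, 2 * ⟪g ρ y, g' ρ y⟫) ρ := by
  have hρ : ρ ∈ S := mem_of_mem_nhds hS
  refine (hasDerivAt_integral_of_dominated_loc_of_deriv_le
    (F' := fun s y ↦ 2 * ⟪g s y, g' s y⟫) (bound := fun y ↦ 2 * C * D * (1 + y ^ 2)⁻¹) hS
    (Filter.eventually_of_mem hS fun s hs ↦ ((hg s hs).norm.pow 2).aestronglyMeasurable)
    ((memLp_two_of_decay (hg ρ hρ) (hC ρ hρ)).integrable_norm_pow two_ne_zero)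
    (continuous_const.mul ((hg ρ hρ).inner hg')).aestronglyMeasurable
    (ae_of_all _ fun y s hs ↦ ?_) (integrable_inv_one_add_sq.const_mul _)
    (ae_of_all _ fun y s hs ↦ (hd s hs y).norm_sq)).2
  rw [← div_eq_mul_inv, le_div_iff₀ (by positivity), norm_mul, Real.norm_two]
  calc 2 * ‖⟪g s y, g' s y⟫‖ * (1 + y ^ 2)
      ≤ 2 * (‖g s y‖ * ‖g' s y‖) * (1 + y ^ 2) := by gcongr; exact norm_inner_le_norm _ _
    _ = 2 * ((1 + y ^ 2) * ‖g s y‖) * ‖g' s y‖ := by ring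
    _ ≤ 2 * C * D := by
        have := hC s hs y
        have := hD s hs y
        have := (norm_nonneg _).trans (norm_le_of_decay (hC s hs) y)
        gcongr

end ParametricEnergy

section HalfPlane

open Set
open scoped ContDiff

variable {F : Type*} [NormedAddCommGroup F] [NormedSpace ℝ F]

/-- A function of `(ρ, y)`, in curried form, that is smooth up to the boundary of the half plane
`ρ ≥ 1`. -/
def SmoothOnHalfPlane (u : ℝ → ℝ → F) : Prop :=
  ContDiffOn ℝ ∞ (fun p : ℝ × ℝ ↦ u p.1 p.2) {p | 1 ≤ p.1}

lemma uniqueDiffOn_halfPlane : UniqueDiffOn ℝ {p : ℝ × ℝ | 1 ≤ p.1} := by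
  have : {p : ℝ × ℝ | 1 ≤ p.1} = Ici 1 ×ˢ univ := by ext; simp
  exact this ▸ (uniqueDiffOn_Ici 1).prod uniqueDiffOn_univ

lemma hasDerivAt_fst_of_hasFDerivAt {f : ℝ × ℝ → F} {f' : ℝ × ℝ →L[ℝ] F} {a b : ℝ}
    (h : HasFDerivAt f f' (a, b)) : HasDerivAt (fun s ↦ f (s, b)) (f' (1, 0)) a :=
  h.comp_hasDerivAt a ((hasDerivAt_id a).prodMk (hasDerivAt_const a b))

lemma hasDerivAt_snd_of_hasFDerivAt {f : ℝ × ℝ → F} {f' : ℝ × ℝ →L[ℝ] F} {a b : ℝ}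
    (h : HasFDerivAt f f' (a, b)) : HasDerivAt (fun z ↦ f (a, z)) (f' (0, 1)) b :=
  h.comp_hasDerivAt b ((hasDerivAt_const b a).prodMk (hasDerivAt_id b))

namespace SmoothOnHalfPlane

variable {u : ℝ → ℝ → F} {ρ : ℝ}

lemma contDiff_slice (hu : SmoothOnHalfPlane u) (hρ : 1 ≤ ρ) : ContDiff ℝ ∞ (u ρ) :=
  ContDiffOn.comp_contDiff (f := fun y ↦ (ρ, y)) hu (contDiff_const.prodMk contDiff_id) fun _ ↦ hρ

lemma contDiffAt (hu : SmoothOnHalfPlane u) (hρ : 1 < ρ) (y : ℝ) :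
    ContDiffAt ℝ ∞ (fun p : ℝ × ℝ ↦ u p.1 p.2) (ρ, y) :=
  ContDiffOn.contDiffAt hu <| Filter.mem_of_superset
    ((isOpen_lt continuous_const continuous_fst).mem_nhds hρ)
    fun p (hp : 1 < p.1) ↦ show 1 ≤ p.1 from hp.le

lemma continuousOn_time (hu : SmoothOnHalfPlane u) (y : ℝ) :
    ContinuousOn (fun s ↦ u s y) (Ici 1) :=
  (ContDiffOn.continuousOn hu).comp (f := fun s ↦ (s, y)) (by fun_prop) fun _ hs ↦ hs

lemma differentiableAt_time (hu : SmoothOnHalfPlane u) (hρ : 1 < ρ) (y : ℝ) :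
    DifferentiableAt ℝ (fun s ↦ u s y) ρ :=
  (hasDerivAt_fst_of_hasFDerivAt
    ((hu.contDiffAt hρ y).differentiableAt (by simp)).hasFDerivAt).differentiableAt

protected lemma deriv_slice (hu : SmoothOnHalfPlane u) :
    SmoothOnHalfPlane fun ρ ↦ deriv (u ρ) := by
  have hfderiv := (ContDiffOn.fderivWithin (m := ∞) hu uniqueDiffOn_halfPlane (by simp)).clm_apply
    (contDiffOn_const (c := ((0 : ℝ), (1 : ℝ))))
  refine hfderiv.congr fun p hp ↦ HasDerivAt.deriv ?_
  have hline : HasDerivAt (fun z : ℝ ↦ (p.1, z)) (0, 1) p.2 :=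
    (hasDerivAt_const p.2 p.1).prodMk (hasDerivAt_id p.2)
  have hu' := (ContDiffOn.differentiableOn hu (by simp) p hp).hasFDerivWithinAt
  exact (hu'.comp_hasDerivWithinAt p.2 hline.hasDerivWithinAt fun _ _ ↦ hp).hasDerivAt
    Filter.univ_mem

lemma iteratedDeriv_slice (hu : SmoothOnHalfPlane u) (k : ℕ) :
    SmoothOnHalfPlane fun ρ ↦ iteratedDeriv k (u ρ) := by
  induction k with
  | zero => simpa only [iteratedDeriv_zero] using hu
  | succ k ih => simpa only [iteratedDeriv_succ] using ih.deriv_slice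

lemma hasDerivAt_iteratedDeriv (hu : SmoothOnHalfPlane u) (hρ : 1 ≤ ρ) (k : ℕ) (y : ℝ) :
    HasDerivAt (iteratedDeriv k (u ρ)) (iteratedDeriv (k + 1) (u ρ) y) y := by
  rw [iteratedDeriv_succ]
  exact (((hu.iteratedDeriv_slice k).contDiff_slice hρ).differentiable (by simp) y).hasDerivAt

lemma deriv_deriv_comm (hu : SmoothOnHalfPlane u) (hρ : 1 < ρ) (y : ℝ) :
    deriv (fun s ↦ deriv (u s) y) ρ = deriv (fun z ↦ deriv (fun s ↦ u s z) ρ) y := by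
  set f : ℝ × ℝ → F := fun p ↦ u p.1 p.2
  have hf {s : ℝ} (hs : 1 < s) (z : ℝ) : HasFDerivAt f (fderiv ℝ f (s, z)) (s, z) :=
    ((hu.contDiffAt hs z).differentiableAt (by simp)).hasFDerivAt
  have hf' : HasFDerivAt (fderiv ℝ f) (fderiv ℝ (fderiv ℝ f) (ρ, y)) (ρ, y) :=
    (((hu.contDiffAt hρ y).fderiv_right (m := ∞) (by simp)).differentiableAt
      (by simp)).hasFDerivAt
  have hleft : (fun s ↦ deriv (u s) y) =ᶠ[nhds ρ] fun s ↦ fderiv ℝ f (s, y) (0, 1) := by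
    filter_upwards [lt_mem_nhds hρ] with s hs
    exact (hasDerivAt_snd_of_hasFDerivAt (hf hs y)).deriv
  have hright : (fun z ↦ deriv (fun s ↦ u s z) ρ) = fun z ↦ fderiv ℝ f (ρ, z) (1, 0) :=
    funext fun z ↦ (hasDerivAt_fst_of_hasFDerivAt (hf hρ z)).deriv
  have hsymm : IsSymmSndFDerivAt ℝ f (ρ, y) :=
    (hu.contDiffAt hρ y).isSymmSndFDerivAt (by simpa using ENat.LEInfty.out)
  rw [hleft.deriv_eq, hright,
    ((hasDerivAt_fst_of_hasFDerivAt hf').clm_apply (hasDerivAt_const ρ _)).deriv,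
    ((hasDerivAt_snd_of_hasFDerivAt hf').clm_apply (hasDerivAt_const y _)).deriv]
  simpa using hsymm (1, 0) (0, 1)

lemma deriv_time_iteratedDeriv (hu : SmoothOnHalfPlane u) (hρ : 1 < ρ) (k : ℕ) (y : ℝ) :
    deriv (fun s ↦ iteratedDeriv k (u s) y) ρ =
      iteratedDeriv k (fun z ↦ deriv (fun s ↦ u s z) ρ) y := by
  induction k generalizing u with
  | zero => simp only [iteratedDeriv_zero]
  | succ k ih =>
    simp only [iteratedDeriv_succ']
    rw [ih hu.deriv_slice, funext (hu.deriv_deriv_comm hρ)]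

end SmoothOnHalfPlane

end HalfPlane

section Leibniz

open scoped ContDiff

variable {E₁ E₂ E₃ F : Type*} [NormedAddCommGroup E₁] [NormedSpace ℝ E₁] [NormedAddCommGroup E₂]
  [NormedSpace ℝ E₂] [NormedAddCommGroup E₃] [NormedSpace ℝ E₃] [NormedAddCommGroup F]
  [NormedSpace ℝ F]

lemma iteratedDeriv_clm_comp (L : E₁ →L[ℝ] F) {f : ℝ → E₁} {k : ℕ} (hf : ContDiff ℝ k f)
    (y : ℝ) : iteratedDeriv k (fun z ↦ L (f z)) y = L (iteratedDeriv k f y) := by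
  simp only [iteratedDeriv_eq_iteratedFDeriv]
  rw [← Function.comp_def L f, L.iteratedFDeriv_comp_left hf.contDiffAt le_rfl]
  rfl

lemma norm_iteratedDeriv_bilinear_le (B : E₁ →L[ℝ] E₂ →L[ℝ] F) (hB : ‖B‖ ≤ 1) {f : ℝ → E₁}
    {g : ℝ → E₂} {k : ℕ} (hf : ContDiff ℝ k f) (hg : ContDiff ℝ k g) (y : ℝ) :
    ‖iteratedDeriv k (fun z ↦ B (f z) (g z)) y‖ ≤
      ∑ i ∈ Finset.range (k + 1),
        k.choose i * ‖iteratedDeriv i f y‖ * ‖iteratedDeriv (k - i) g y‖ := by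
  simpa only [norm_iteratedFDeriv_eq_norm_iteratedDeriv] using
    B.norm_iteratedFDeriv_le_of_bilinear_of_le_one hf hg y le_rfl hB

lemma norm_iteratedDeriv_trilinear_le (T : E₁ →L[ℝ] E₂ →L[ℝ] E₃ →L[ℝ] F)
    (hT : ∀ x y z, ‖T x y z‖ ≤ ‖x‖ * ‖y‖ * ‖z‖) {f : ℝ → E₁} {g : ℝ → E₂} {h : ℝ → E₃} {k : ℕ}
    (hf : ContDiff ℝ k f) (hg : ContDiff ℝ k g) (hh : ContDiff ℝ k h) (y : ℝ) :
    ‖iteratedDeriv k (fun z ↦ T (f z) (g z) (h z)) y‖ ≤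
      ∑ i ∈ Finset.range (k + 1), k.choose i *
        (∑ j ∈ Finset.range (i + 1),
          i.choose j * ‖iteratedDeriv j f y‖ * ‖iteratedDeriv (i - j) g y‖) *
        ‖iteratedDeriv (k - i) h y‖ := by
  have hTfg : ContDiff ℝ k fun z ↦ T (f z) (g z) := by fun_prop
  refine (norm_iteratedDeriv_bilinear_le (.id ℝ (E₃ →L[ℝ] F)) ContinuousLinearMap.norm_id_le
    hTfg hh y).trans (Finset.sum_le_sum fun i hi ↦ ?_)
  have hik : (i : WithTop ℕ∞) ≤ k := mod_cast Finset.mem_range_succ_iff.1 hi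
  gcongr
  refine norm_iteratedDeriv_bilinear_le T (T.opNorm_le_bound₂ zero_le_one fun x x' ↦ ?_)
    (hf.of_le hik) (hg.of_le hik) y
  rw [one_mul]
  exact (T x x').opNorm_le_bound (by positivity) (hT x x')

end Leibniz

section Systems

open scoped RealInnerProductSpace ContDiff
open Set

/-- A semilinear Dirac-type system `∂_ρ Φ = ρ⁻¹ A ∂_y Φ + J Φ + ρ⁻¹ N(Φ, Φ, Φ)` for a field with
values in `E`: the transport part `A` is symmetric, the mass part `J` is skew, and the cubic part
`N` preserves the pointwise norm. The corrector `B` solves `B J - J B = -2 A`; it provides the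
normal form correction of the pointwise density. Every map is normalized to have norm at most one,
except for `J`, whose size is irrelevant. -/
structure CubicDiracSystem (E : Type*) [NormedAddCommGroup E] [InnerProductSpace ℝ E] where
  transport : E →L[ℝ] E
  mass : E →L[ℝ] E
  corrector : E →L[ℝ] E
  cubic : E →L[ℝ] E →L[ℝ] E →L[ℝ] E
  inner_transport_left (x y : E) : ⟪transport x, y⟫ = ⟪x, transport y⟫
  inner_mass_left (x y : E) : ⟪mass x, y⟫ = -⟪x, mass y⟫
  corrector_mass (x : E) : corrector (mass x) = mass (corrector x) - (2 : ℝ) • transport x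
  inner_cubic_self (x : E) : ⟪x, cubic x x x⟫ = 0
  norm_transport_le (x : E) : ‖transport x‖ ≤ ‖x‖
  norm_corrector_le (x : E) : ‖corrector x‖ ≤ ‖x‖
  norm_cubic_le (x y z : E) : ‖cubic x y z‖ ≤ ‖x‖ * ‖y‖ * ‖z‖

variable {E : Type*} [NormedAddCommGroup E] [InnerProductSpace ℝ E]

/-- The squared `L²` norm of the `k`-th derivative of the slice `Φ ρ`. -/
def energy (Φ : ℝ → ℝ → E) (k : ℕ) (ρ : ℝ) : ℝ := ∫ y, ‖iteratedDeriv k (Φ ρ) y‖ ^ 2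

lemma energy_nonneg (Φ : ℝ → ℝ → E) (k : ℕ) (ρ : ℝ) : 0 ≤ energy Φ k ρ :=
  integral_nonneg fun _ ↦ sq_nonneg _

namespace CubicDiracSystem

variable (S : CubicDiracSystem E)

/-- The cubic nonlinearity `N(f, f, f)` evaluated along a function of `y`. -/
def cubicTerm (f : ℝ → E) (y : ℝ) : E := S.cubic (f y) (f y) (f y)

/-- Smooth solutions on the half plane `ρ ≥ 1` all of whose `y`-derivatives decay quadratically,
locally uniformly in `ρ`. -/
structure IsDecayingSolution (Φ : ℝ → ℝ → E) : Prop where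
  smooth : SmoothOnHalfPlane Φ
  decay (k : ℕ) (R : ℝ) :
    ∃ C, ∀ ρ ∈ Icc 1 R, ∀ y, (1 + y ^ 2) * ‖iteratedDeriv k (Φ ρ) y‖ ≤ C
  equation {ρ : ℝ} (hρ : 1 < ρ) (y : ℝ) : deriv (fun s ↦ Φ s y) ρ =
    ρ⁻¹ • (S.transport (deriv (Φ ρ) y) + S.cubicTerm (Φ ρ) y) + S.mass (Φ ρ y)

lemma inner_self_mass (x : E) : ⟪x, S.mass x⟫ = 0 := by
  linarith [S.inner_mass_left x x, real_inner_comm (S.mass x) x]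

section CubicTerm

variable {S} {f : ℝ → E}

lemma contDiff_cubicTerm {n : WithTop ℕ∞} (hf : ContDiff ℝ n f) : ContDiff ℝ n (S.cubicTerm f) :=
  (hf.continuousLinearMap_comp S.cubic).clm_apply hf |>.clm_apply hf

lemma norm_iteratedDeriv_cubicTerm_le {k : ℕ} (hf : ContDiff ℝ k f) (y : ℝ) :
    ‖iteratedDeriv k (S.cubicTerm f) y‖ ≤
      ∑ i ∈ Finset.range (k + 1), k.choose i *
        (∑ j ∈ Finset.range (i + 1),
          i.choose j * ‖iteratedDeriv j f y‖ * ‖iteratedDeriv (i - j) f y‖) *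
        ‖iteratedDeriv (k - i) f y‖ :=
  norm_iteratedDeriv_trilinear_le S.cubic S.norm_cubic_le hf hf hf y

lemma norm_cubicTerm_le (f : ℝ → E) (y : ℝ) : ‖S.cubicTerm f y‖ ≤ ‖f y‖ ^ 3 :=
  (S.norm_cubic_le _ _ _).trans_eq (by ring)

lemma norm_iteratedDeriv_one_cubicTerm_le (hf : ContDiff ℝ 1 f) (y : ℝ) :
    ‖iteratedDeriv 1 (S.cubicTerm f) y‖ ≤ 3 * ‖f y‖ ^ 2 * ‖iteratedDeriv 1 f y‖ := by
  refine (norm_iteratedDeriv_cubicTerm_le hf y).trans_eq ?_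
  simp only [Nat.reduceAdd, Finset.sum_range_succ, Finset.range_one, Finset.sum_singleton,
    Nat.choose_self, Nat.choose_zero_right, Nat.cast_one, Nat.sub_zero, Nat.sub_self,
    iteratedDeriv_zero]
  ring

lemma norm_iteratedDeriv_two_cubicTerm_le (hf : ContDiff ℝ 2 f) (y : ℝ) :
    ‖iteratedDeriv 2 (S.cubicTerm f) y‖ ≤
      3 * ‖f y‖ ^ 2 * ‖iteratedDeriv 2 f y‖ + 6 * ‖f y‖ * ‖iteratedDeriv 1 f y‖ ^ 2 := by
  refine (norm_iteratedDeriv_cubicTerm_le hf y).trans_eq ?_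
  simp only [Nat.reduceAdd, Finset.sum_range_succ, Finset.range_one, Finset.sum_singleton,
    Nat.choose_self, Nat.choose_zero_right, Nat.choose_one_right, Nat.cast_one, Nat.cast_ofNat,
    Nat.sub_zero, Nat.sub_self, Nat.reduceSub, iteratedDeriv_zero]
  ring

lemma norm_iteratedDeriv_three_cubicTerm_le (hf : ContDiff ℝ 3 f) (y : ℝ) :
    ‖iteratedDeriv 3 (S.cubicTerm f) y‖ ≤
      3 * ‖f y‖ ^ 2 * ‖iteratedDeriv 3 f y‖ +
        18 * ‖f y‖ * ‖iteratedDeriv 1 f y‖ * ‖iteratedDeriv 2 f y‖ +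
        6 * ‖iteratedDeriv 1 f y‖ ^ 3 := by
  refine (norm_iteratedDeriv_cubicTerm_le hf y).trans_eq ?_
  simp only [Nat.reduceAdd, Finset.sum_range_succ, Finset.range_one, Finset.sum_singleton,
    Nat.choose, Nat.cast_one, Nat.cast_ofNat, Nat.sub_zero, Nat.sub_self, Nat.reduceSub,
    iteratedDeriv_zero]
  ring

end CubicTerm

/-- The pointwise density `‖Φ‖²` with its normal form correction. The commutator of the corrector
with the mass term cancels the transport term of size `ρ⁻¹` in the evolution of `‖Φ‖²`, so that the
corrected density changes only at the integrable rate `ρ⁻²`. -/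
def correctedDensity (Φ : ℝ → ℝ → E) (y ρ : ℝ) : ℝ :=
  ‖Φ ρ y‖ ^ 2 + ρ⁻¹ * ⟪Φ ρ y, S.corrector (iteratedDeriv 1 (Φ ρ) y)⟫

lemma correctedDensity_flux_eq (r : ℝ) (x x₁ x₂ c : E) :
    2 * ⟪x, r • (S.transport x₁ + S.cubic x x x) + S.mass x⟫ +
        r * (⟪r • (S.transport x₁ + S.cubic x x x) + S.mass x, S.corrector x₁⟫ +
          ⟪x, S.corrector (r • (S.transport x₂ + c) + S.mass x₁)⟫) =
      r ^ 2 * (⟪S.transport x₁ + S.cubic x x x, S.corrector x₁⟫ +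
        ⟪x, S.corrector (S.transport x₂ + c)⟫) := by
  simp only [map_add, map_smul, S.corrector_mass, inner_add_left, inner_add_right, inner_sub_right,
    inner_smul_left, inner_smul_right, S.inner_mass_left, S.inner_self_mass, S.inner_cubic_self,
    conj_trivial]
  ring

lemma abs_inner_corrector_le {x z : E} {a b : ℝ} (hx : ‖x‖ ≤ a) (hz : ‖z‖ ≤ b) :
    |⟪x, S.corrector z⟫| ≤ a * b :=
  (abs_real_inner_le_norm _ _).trans <|
    mul_le_mul hx ((S.norm_corrector_le z).trans hz) (norm_nonneg _) ((norm_nonneg x).trans hx)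

namespace IsDecayingSolution

variable {S} {Φ : ℝ → ℝ → E} {ρ : ℝ}

lemma contDiff_slice (h : S.IsDecayingSolution Φ) (hρ : 1 ≤ ρ) (k : ℕ) : ContDiff ℝ k (Φ ρ) :=
  (h.smooth.contDiff_slice hρ).of_le ENat.LEInfty.out

lemma memLp (h : S.IsDecayingSolution Φ) (hρ : 1 ≤ ρ) (k : ℕ) :
    MemLp (iteratedDeriv k (Φ ρ)) 2 :=
  have ⟨_, hC⟩ := h.decay k ρ
  memLp_two_of_decay ((h.smooth.iteratedDeriv_slice k).contDiff_slice hρ).continuous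
    (hC ρ ⟨hρ, le_rfl⟩)

lemma integrable_norm_sq (h : S.IsDecayingSolution Φ) (hρ : 1 ≤ ρ) (k : ℕ) :
    Integrable fun y ↦ ‖iteratedDeriv k (Φ ρ) y‖ ^ 2 :=
  (h.memLp hρ k).integrable_norm_pow two_ne_zero

lemma norm_sq_le_energy_add_energy (h : S.IsDecayingSolution Φ) (hρ : 1 ≤ ρ) (k : ℕ) (y : ℝ) :
    ‖iteratedDeriv k (Φ ρ) y‖ ^ 2 ≤ energy Φ k ρ + energy Φ (k + 1) ρ :=
  norm_sq_le_integral_add_integral (h.smooth.hasDerivAt_iteratedDeriv hρ k) (h.memLp hρ k)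
    (h.memLp hρ (k + 1)) y

lemma deriv_time_iteratedDeriv (h : S.IsDecayingSolution Φ) (hρ : 1 < ρ) (k : ℕ) (y : ℝ) :
    deriv (fun s ↦ iteratedDeriv k (Φ s) y) ρ =
      ρ⁻¹ • (S.transport (iteratedDeriv (k + 1) (Φ ρ) y) +
        iteratedDeriv k (S.cubicTerm (Φ ρ)) y) + S.mass (iteratedDeriv k (Φ ρ) y) := by
  have hΦ : ContDiff ℝ k (Φ ρ) := h.contDiff_slice hρ.le k
  have hΦ' : ContDiff ℝ k (deriv (Φ ρ)) :=
    (h.smooth.deriv_slice.contDiff_slice hρ.le).of_le ENat.LEInfty.out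
  have hA : ContDiff ℝ k fun z ↦ S.transport (deriv (Φ ρ) z) := S.transport.contDiff.comp hΦ'
  have hJ : ContDiff ℝ k fun z ↦ S.mass (Φ ρ z) := S.mass.contDiff.comp hΦ
  have hN : ContDiff ℝ k (S.cubicTerm (Φ ρ)) := contDiff_cubicTerm hΦ
  rw [h.smooth.deriv_time_iteratedDeriv hρ, funext (h.equation hρ),
    iteratedDeriv_fun_add ((hA.add hN).const_smul ρ⁻¹).contDiffAt hJ.contDiffAt,
    iteratedDeriv_fun_const_smul_field, iteratedDeriv_fun_add hA.contDiffAt hN.contDiffAt,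
    iteratedDeriv_clm_comp S.transport hΦ', iteratedDeriv_clm_comp S.mass hΦ,
    iteratedDeriv_succ']

lemma decay_cubicTerm (h : S.IsDecayingSolution Φ) (k : ℕ) (R : ℝ) :
    ∃ C, ∀ ρ ∈ Icc 1 R, ∀ y, (1 + y ^ 2) * ‖iteratedDeriv k (S.cubicTerm (Φ ρ)) y‖ ≤ C := by
  choose C hC using fun j ↦ h.decay j R
  refine ⟨∑ i ∈ Finset.range (k + 1), k.choose i *
    (∑ j ∈ Finset.range (i + 1), i.choose j * |C j| * |C (i - j)|) * |C (k - i)|,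
    fun ρ hρ y ↦ ?_⟩
  have hdecay (j : ℕ) : (1 + y ^ 2) * ‖iteratedDeriv j (Φ ρ) y‖ ≤ |C j| :=
    (hC j ρ hρ y).trans (le_abs_self _)
  have hbound (j : ℕ) : ‖iteratedDeriv j (Φ ρ) y‖ ≤ |C j| :=
    (norm_le_of_decay (hC j ρ hρ) y).trans (le_abs_self _)
  refine (mul_le_mul_of_nonneg_left (norm_iteratedDeriv_cubicTerm_le
    (h.contDiff_slice hρ.1 k) y) (by positivity)).trans ?_
  rw [Finset.mul_sum]
  refine Finset.sum_le_sum fun i _ ↦ ?_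
  rw [mul_left_comm]
  gcongr
  exacts [hbound _, hbound _, hdecay _]

lemma decay_deriv_time (h : S.IsDecayingSolution Φ) (k : ℕ) (R : ℝ) :
    ∃ C, ∀ ρ ∈ Ioc 1 R, ∀ y,
      (1 + y ^ 2) * ‖deriv (fun s ↦ iteratedDeriv k (Φ s) y) ρ‖ ≤ C := by
  obtain ⟨C, hC⟩ := h.decay k R
  obtain ⟨C', hC'⟩ := h.decay (k + 1) R
  obtain ⟨D, hD⟩ := h.decay_cubicTerm k R
  refine ⟨C' + D + ‖S.mass‖ * C, fun ρ hρ y ↦ ?_⟩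
  have hρR : ρ ∈ Icc 1 R := ⟨hρ.1.le, hρ.2⟩
  have hinv : ‖ρ⁻¹‖ ≤ 1 := by
    rw [Real.norm_of_nonneg (inv_nonneg.2 (zero_le_one.trans hρ.1.le))]
    exact inv_le_one_of_one_le₀ hρ.1.le
  rw [h.deriv_time_iteratedDeriv hρ.1]
  set x := iteratedDeriv (k + 1) (Φ ρ) y
  set z := iteratedDeriv k (S.cubicTerm (Φ ρ)) y
  set v := iteratedDeriv k (Φ ρ) y
  calc (1 + y ^ 2) * ‖ρ⁻¹ • (S.transport x + z) + S.mass v‖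
      ≤ (1 + y ^ 2) * (‖S.transport x‖ + ‖z‖ + ‖S.mass‖ * ‖v‖) := by
        gcongr
        refine (norm_add_le _ _).trans (add_le_add ?_ (S.mass.le_opNorm v))
        rw [norm_smul]
        exact (mul_le_of_le_one_left (norm_nonneg _) hinv).trans (norm_add_le _ _)
    _ ≤ (1 + y ^ 2) * (‖x‖ + ‖z‖ + ‖S.mass‖ * ‖v‖) := by gcongr; exact S.norm_transport_le x
    _ = (1 + y ^ 2) * ‖x‖ + (1 + y ^ 2) * ‖z‖ + ‖S.mass‖ * ((1 + y ^ 2) * ‖v‖) := by ring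
    _ ≤ C' + D + ‖S.mass‖ * C := by
        gcongr
        exacts [hC' ρ hρR y, hD ρ hρR y, hC ρ hρR y]

lemma continuous_deriv_time (h : S.IsDecayingSolution Φ) (hρ : 1 < ρ) (k : ℕ) :
    Continuous fun y ↦ deriv (fun s ↦ iteratedDeriv k (Φ s) y) ρ := by
  have hΦ (j : ℕ) : Continuous (iteratedDeriv j (Φ ρ)) :=
    ((h.smooth.iteratedDeriv_slice j).contDiff_slice hρ.le).continuous
  have hN : Continuous (iteratedDeriv k (S.cubicTerm (Φ ρ))) :=
    (contDiff_cubicTerm (h.contDiff_slice hρ.le k)).continuous_iteratedDeriv k le_rfl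
  simp only [h.deriv_time_iteratedDeriv hρ]
  fun_prop

lemma hasDerivAt_time (h : S.IsDecayingSolution Φ) (hρ : 1 < ρ) (k : ℕ) (y : ℝ) :
    HasDerivAt (fun s ↦ iteratedDeriv k (Φ s) y)
      (deriv (fun s ↦ iteratedDeriv k (Φ s) y) ρ) ρ :=
  ((h.smooth.iteratedDeriv_slice k).differentiableAt_time hρ y).hasDerivAt

lemma continuousOn_energy (h : S.IsDecayingSolution Φ) (k : ℕ) (R : ℝ) :
    ContinuousOn (energy Φ k) (Icc 1 R) :=
  have ⟨_, hC⟩ := h.decay k R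
  continuousOn_integral_norm_sq_of_decay
    (fun _ hs ↦ ((h.smooth.iteratedDeriv_slice k).contDiff_slice hs.1).continuous)
    (fun y ↦ ((h.smooth.iteratedDeriv_slice k).continuousOn_time y).mono fun _ hs ↦ hs.1) hC

lemma hasDerivAt_energy (h : S.IsDecayingSolution Φ) (hρ : 1 < ρ) (k : ℕ) :
    HasDerivAt (energy Φ k) (∫ y, 2 * ⟪iteratedDeriv k (Φ ρ) y,
      deriv (fun s ↦ iteratedDeriv k (Φ s) y) ρ⟫) ρ := by
  obtain ⟨C, hC⟩ := h.decay k (ρ + 1)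
  obtain ⟨D, hD⟩ := h.decay_deriv_time k (ρ + 1)
  exact hasDerivAt_integral_norm_sq_of_decay (S := Ioo 1 (ρ + 1))
    (g' := fun s y ↦ deriv (fun s ↦ iteratedDeriv k (Φ s) y) s)
    (Ioo_mem_nhds hρ (lt_add_one ρ))
    (fun s hs ↦ ((h.smooth.iteratedDeriv_slice k).contDiff_slice hs.1.le).continuous)
    (h.continuous_deriv_time hρ k) (fun s hs y ↦ h.hasDerivAt_time hs.1 k y)
    (fun s hs ↦ hC s ⟨hs.1.le, hs.2.le⟩)
    (fun s hs ↦ norm_le_of_decay (hD s ⟨hs.1, hs.2.le⟩))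

lemma integrable_inner_transport (h : S.IsDecayingSolution Φ) (hρ : 1 ≤ ρ) (j k : ℕ) :
    Integrable fun y ↦ ⟪iteratedDeriv j (Φ ρ) y, S.transport (iteratedDeriv k (Φ ρ) y)⟫ :=
  integrable_inner_of_memLp_two (h.memLp hρ j) (S.transport.comp_memLp' (h.memLp hρ k))

lemma integral_inner_transport_eq_zero (h : S.IsDecayingSolution Φ) (hρ : 1 ≤ ρ) (k : ℕ) :
    ∫ y, ⟪iteratedDeriv k (Φ ρ) y, S.transport (iteratedDeriv (k + 1) (Φ ρ) y)⟫ = 0 := by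
  have hderiv (y : ℝ) :
      HasDerivAt (fun y ↦ ⟪iteratedDeriv k (Φ ρ) y, S.transport (iteratedDeriv k (Φ ρ) y)⟫)
        (2 * ⟪iteratedDeriv k (Φ ρ) y, S.transport (iteratedDeriv (k + 1) (Φ ρ) y)⟫) y := by
    have hk := h.smooth.hasDerivAt_iteratedDeriv hρ k y
    refine (hk.inner ℝ (S.transport.hasFDerivAt.comp_hasDerivAt y hk)).congr_deriv ?_
    rw [Function.comp_apply, ← S.inner_transport_left (iteratedDeriv (k + 1) (Φ ρ) y),
      real_inner_comm, two_mul]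
  have hzero := integral_eq_zero_of_hasDerivAt_of_integrable hderiv
    ((h.integrable_inner_transport hρ k (k + 1)).const_mul 2) (h.integrable_inner_transport hρ k k)
  rwa [integral_const_mul, mul_eq_zero_iff_left two_ne_zero] at hzero

lemma deriv_energy_le (h : S.IsDecayingSolution Φ) (hρ : 1 < ρ) (k : ℕ) {b : ℝ → ℝ}
    (hb : Integrable b) (hle : ∀ y,
      2 * (‖iteratedDeriv k (Φ ρ) y‖ * ‖iteratedDeriv k (S.cubicTerm (Φ ρ)) y‖) ≤ b y) :
    deriv (energy Φ k) ρ ≤ ρ⁻¹ * ∫ y, b y := by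
  obtain ⟨D, hD⟩ := h.decay_deriv_time k ρ
  have htime := memLp_two_of_decay (h.continuous_deriv_time hρ k) (hD ρ ⟨hρ, le_rfl⟩)
  have hint := (integrable_inner_of_memLp_two (h.memLp hρ.le k) htime).const_mul 2
  have htransport := (h.integrable_inner_transport hρ.le k (k + 1)).const_mul 2
  rw [(h.hasDerivAt_energy hρ k).deriv]
  calc ∫ y, 2 * ⟪iteratedDeriv k (Φ ρ) y, deriv (fun s ↦ iteratedDeriv k (Φ s) y) ρ⟫
      ≤ ∫ y, ρ⁻¹ * (2 * ⟪iteratedDeriv k (Φ ρ) y,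
          S.transport (iteratedDeriv (k + 1) (Φ ρ) y)⟫ + b y) := by
        refine integral_mono hint ((htransport.add hb).const_mul _) fun y ↦ ?_
        simp only [h.deriv_time_iteratedDeriv hρ, inner_add_right, inner_smul_right,
          S.inner_self_mass, add_zero]
        rw [mul_left_comm]
        gcongr
        linarith [hle y, real_inner_le_norm (iteratedDeriv k (Φ ρ) y)
          (iteratedDeriv k (S.cubicTerm (Φ ρ)) y)]
    _ = ρ⁻¹ * ∫ y, b y := by
        rw [integral_const_mul, integral_add htransport hb, integral_const_mul,
          h.integral_inner_transport_eq_zero hρ.le, mul_zero, zero_add]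

lemma integral_norm_deriv_pow_four_le_energy (h : S.IsDecayingSolution Φ) (hρ : 1 ≤ ρ) {K : ℝ}
    (hK : ∀ y, ‖Φ ρ y‖ ^ 2 ≤ K) :
    ∫ y, ‖iteratedDeriv 1 (Φ ρ) y‖ ^ 4 ≤ 9 * K * energy Φ 2 ρ :=
  integral_norm_deriv_pow_four_le (h.smooth.hasDerivAt_iteratedDeriv hρ 0)
    (h.smooth.hasDerivAt_iteratedDeriv hρ 1) (h.memLp hρ 1) (h.memLp hρ 2)
    (by simpa only [iteratedDeriv_zero] using hK)

lemma deriv_energy_zero_le (h : S.IsDecayingSolution Φ) (hρ : 1 < ρ) {K : ℝ}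
    (hK : ∀ y, ‖Φ ρ y‖ ^ 2 ≤ K) : deriv (energy Φ 0) ρ ≤ ρ⁻¹ * (2 * K * energy Φ 0 ρ) := by
  refine (h.deriv_energy_le hρ 0 ((h.integrable_norm_sq hρ.le 0).const_mul (2 * K))
    fun y ↦ ?_).trans_eq (by rw [integral_const_mul, energy])
  simp only [iteratedDeriv_zero]
  calc 2 * (‖Φ ρ y‖ * ‖S.cubicTerm (Φ ρ) y‖)
      ≤ 2 * (‖Φ ρ y‖ * ‖Φ ρ y‖ ^ 3) := by gcongr; exact norm_cubicTerm_le _ _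
    _ = 2 * ‖Φ ρ y‖ ^ 2 * ‖Φ ρ y‖ ^ 2 := by ring
    _ ≤ 2 * K * ‖Φ ρ y‖ ^ 2 := by gcongr; exact hK y

lemma deriv_energy_one_le (h : S.IsDecayingSolution Φ) (hρ : 1 < ρ) {K : ℝ}
    (hK : ∀ y, ‖Φ ρ y‖ ^ 2 ≤ K) : deriv (energy Φ 1) ρ ≤ ρ⁻¹ * (6 * K * energy Φ 1 ρ) := by
  refine (h.deriv_energy_le hρ 1 ((h.integrable_norm_sq hρ.le 1).const_mul (6 * K))
    fun y ↦ ?_).trans_eq (by rw [integral_const_mul, energy])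
  have hcubic := norm_iteratedDeriv_one_cubicTerm_le (S := S) (h.contDiff_slice hρ.le 1) y
  set n₁ := ‖iteratedDeriv 1 (Φ ρ) y‖
  calc 2 * (n₁ * ‖iteratedDeriv 1 (S.cubicTerm (Φ ρ)) y‖)
      ≤ 2 * (n₁ * (3 * ‖Φ ρ y‖ ^ 2 * n₁)) := by gcongr
    _ = 6 * ‖Φ ρ y‖ ^ 2 * n₁ ^ 2 := by ring
    _ ≤ 6 * K * n₁ ^ 2 := by gcongr; exact hK y

lemma deriv_energy_two_le (h : S.IsDecayingSolution Φ) (hρ : 1 < ρ) {K : ℝ}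
    (hK : ∀ y, ‖Φ ρ y‖ ^ 2 ≤ K) : deriv (energy Φ 2) ρ ≤ ρ⁻¹ * (66 * K * energy Φ 2 ρ) := by
  have hsq := (h.integrable_norm_sq hρ.le 2).const_mul (12 * K)
  have hfour := (integrable_norm_pow_four_of_memLp_two
    (h.smooth.hasDerivAt_iteratedDeriv hρ.le 1) (h.memLp hρ.le 1) (h.memLp hρ.le 2)).const_mul 6
  refine (h.deriv_energy_le hρ 2 (hsq.add hfour) fun y ↦ ?_).trans ?_
  · have hcubic := norm_iteratedDeriv_two_cubicTerm_le (S := S) (h.contDiff_slice hρ.le 2) y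
    set n₁ := ‖iteratedDeriv 1 (Φ ρ) y‖
    set n₂ := ‖iteratedDeriv 2 (Φ ρ) y‖
    calc 2 * (n₂ * ‖iteratedDeriv 2 (S.cubicTerm (Φ ρ)) y‖)
        ≤ 2 * (n₂ * (3 * ‖Φ ρ y‖ ^ 2 * n₂ + 6 * ‖Φ ρ y‖ * n₁ ^ 2)) := by gcongr
      _ = 6 * ‖Φ ρ y‖ ^ 2 * n₂ ^ 2 + 6 * (2 * (‖Φ ρ y‖ * n₂) * n₁ ^ 2) := by ring
      _ ≤ 6 * ‖Φ ρ y‖ ^ 2 * n₂ ^ 2 + 6 * ((‖Φ ρ y‖ * n₂) ^ 2 + (n₁ ^ 2) ^ 2) := by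
        gcongr; exact two_mul_le_add_sq _ _
      _ = 12 * ‖Φ ρ y‖ ^ 2 * n₂ ^ 2 + 6 * n₁ ^ 4 := by ring
      _ ≤ 12 * K * n₂ ^ 2 + 6 * n₁ ^ 4 := by gcongr; exact hK y
  · have hρ0 : 0 ≤ ρ⁻¹ := inv_nonneg.2 (zero_le_one.trans hρ.le)
    refine mul_le_mul_of_nonneg_left ?_ hρ0
    rw [integral_add' hsq hfour, integral_const_mul, integral_const_mul, ← energy]
    linarith [h.integral_norm_deriv_pow_four_le_energy hρ.le hK]

lemma deriv_energy_three_le (h : S.IsDecayingSolution Φ) (hρ : 1 < ρ) {K m : ℝ} (hK0 : 0 < K)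
    (hK : ∀ y, ‖Φ ρ y‖ ^ 2 ≤ K) (hm : ∀ y, ‖iteratedDeriv 1 (Φ ρ) y‖ ^ 2 ≤ m) :
    deriv (energy Φ 3) ρ ≤ ρ⁻¹ *
      (30 * K * energy Φ 3 ρ + 18 * m * energy Φ 2 ρ + 6 * K⁻¹ * m ^ 2 * energy Φ 1 ρ) := by
  have hsq₁ := (h.integrable_norm_sq hρ.le 1).const_mul (6 * K⁻¹ * m ^ 2)
  have hsq₂ := (h.integrable_norm_sq hρ.le 2).const_mul (18 * m)
  have hsq₃ := (h.integrable_norm_sq hρ.le 3).const_mul (30 * K)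
  refine (h.deriv_energy_le hρ 3 ((hsq₃.add hsq₂).add hsq₁) fun y ↦ ?_).trans_eq ?_
  · have hcubic := norm_iteratedDeriv_three_cubicTerm_le (S := S) (h.contDiff_slice hρ.le 3) y
    have hK := hK y
    have hm := hm y
    simp only [Pi.add_apply]
    set n₀ := ‖Φ ρ y‖
    set n₁ := ‖iteratedDeriv 1 (Φ ρ) y‖
    set n₂ := ‖iteratedDeriv 2 (Φ ρ) y‖
    set n₃ := ‖iteratedDeriv 3 (Φ ρ) y‖
    have hyoung₁ : 2 * (n₀ * n₃) * (n₁ * n₂) ≤ n₀ ^ 2 * n₃ ^ 2 + n₁ ^ 2 * n₂ ^ 2 := by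
      linarith [two_mul_le_add_sq (n₀ * n₃) (n₁ * n₂)]
    have hyoung₂ : 2 * n₁ ^ 3 * n₃ ≤ K * n₃ ^ 2 + K⁻¹ * (n₁ ^ 2) ^ 2 * n₁ ^ 2 := by
      linarith [two_mul_mul_le_mul_sq_add_inv_mul_sq hK0 n₃ (n₁ ^ 3)]
    calc 2 * (n₃ * ‖iteratedDeriv 3 (S.cubicTerm (Φ ρ)) y‖)
        ≤ 2 * (n₃ * (3 * n₀ ^ 2 * n₃ + 18 * n₀ * n₁ * n₂ + 6 * n₁ ^ 3)) := by gcongr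
      _ = 6 * n₀ ^ 2 * n₃ ^ 2 + 18 * (2 * (n₀ * n₃) * (n₁ * n₂)) + 6 * (2 * n₁ ^ 3 * n₃) := by
        ring
      _ ≤ 6 * n₀ ^ 2 * n₃ ^ 2 + 18 * (n₀ ^ 2 * n₃ ^ 2 + n₁ ^ 2 * n₂ ^ 2) +
          6 * (K * n₃ ^ 2 + K⁻¹ * (n₁ ^ 2) ^ 2 * n₁ ^ 2) := by gcongr
      _ ≤ 6 * K * n₃ ^ 2 + 18 * (K * n₃ ^ 2 + m * n₂ ^ 2) +
          6 * (K * n₃ ^ 2 + K⁻¹ * m ^ 2 * n₁ ^ 2) := by gcongr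
      _ = 30 * K * n₃ ^ 2 + 18 * m * n₂ ^ 2 + 6 * K⁻¹ * m ^ 2 * n₁ ^ 2 := by ring
  · rw [integral_add' (hsq₃.add hsq₂) hsq₁, integral_add' hsq₃ hsq₂]
    simp only [integral_const_mul, energy]

lemma energy_le_rpow_of_lt_three (h : S.IsDecayingSolution Φ) {k : ℕ} (hk : k < 3) {K : ℝ}
    (hρ : 1 ≤ ρ) (hK : ∀ s ∈ Icc 1 ρ, ∀ y, ‖Φ s y‖ ^ 2 ≤ K) :
    energy Φ k ρ ≤ energy Φ k 1 * ρ ^ (66 * K) := by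
  have hderiv : ∀ s ∈ Ioo 1 ρ, deriv (energy Φ k) s ≤
      s⁻¹ * (66 * K * energy Φ k s + 0 * s ^ (66 * K + 1)) := by
    intro s hs
    have hKs := hK s ⟨hs.1.le, hs.2.le⟩
    have hK0 : 0 ≤ K := (sq_nonneg _).trans (hKs 0)
    have hF := energy_nonneg Φ k s
    have hs0 : 0 ≤ s⁻¹ := inv_nonneg.2 (zero_le_one.trans hs.1.le)
    rw [zero_mul, add_zero]
    interval_cases k
    · exact (h.deriv_energy_zero_le hs.1 hKs).trans (by gcongr; norm_num)
    · exact (h.deriv_energy_one_le hs.1 hKs).trans (by gcongr; norm_num)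
    · exact h.deriv_energy_two_le hs.1 hKs
  simpa using le_of_deriv_le_rpow (lt_add_one (66 * K)).ne (h.continuousOn_energy k ρ)
    (fun s hs ↦ (h.hasDerivAt_energy hs.1 k).differentiableAt) hderiv ⟨hρ, le_rfl⟩

lemma energy_le_rpow_one_sixth (h : S.IsDecayingSolution Φ) {e : ℝ}
    (he : ∀ k < 4, energy Φ k 1 ≤ e) {k : ℕ} (hk : k < 3) (hρ : 1 ≤ ρ)
    (hK : ∀ s ∈ Icc 1 ρ, ∀ y, ‖Φ s y‖ ^ 2 ≤ 1 / 400) :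
    energy Φ k ρ ≤ e * ρ ^ (1 / 6 : ℝ) :=
  have he0 : 0 ≤ e := (energy_nonneg Φ 0 1).trans (he 0 (by norm_num))
  (h.energy_le_rpow_of_lt_three hk hρ hK).trans <| mul_le_mul (he k (by lia))
    (Real.rpow_le_rpow_of_exponent_le hρ (by norm_num)) (by positivity) he0

lemma deriv_energy_three_le_rpow (h : S.IsDecayingSolution Φ) {e : ℝ}
    (he : ∀ k < 4, energy Φ k 1 ≤ e) (hsmall : e ≤ 1 / 400) (hρ : 1 < ρ)
    (hK : ∀ s ∈ Icc 1 ρ, ∀ y, ‖Φ s y‖ ^ 2 ≤ 1 / 400) :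
    deriv (energy Φ 3) ρ ≤
      ρ⁻¹ * (1 / 6 * energy Φ 3 ρ + 3 / 20 * e * ρ ^ (1 / 2 : ℝ)) := by
  have hρ0 : 0 < ρ := zero_lt_one.trans hρ
  have he0 : 0 ≤ e := (energy_nonneg Φ 0 1).trans (he 0 (by norm_num))
  have henergy {k : ℕ} (hk : k < 3) := h.energy_le_rpow_one_sixth he hk hρ.le hK
  have hhalf : ρ ^ (1 / 2 : ℝ) = (ρ ^ (1 / 6 : ℝ)) ^ 3 := by
    rw [← Real.rpow_mul_natCast hρ0.le]; norm_num
  have hr : 1 ≤ ρ ^ (1 / 6 : ℝ) := Real.one_le_rpow hρ.le (by norm_num)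
  rw [hhalf]
  set r : ℝ := ρ ^ (1 / 6 : ℝ)
  have hm (y : ℝ) : ‖iteratedDeriv 1 (Φ ρ) y‖ ^ 2 ≤ 2 * e * r := by
    linarith [h.norm_sq_le_energy_add_energy hρ.le 1 y, henergy (k := 1) (by norm_num),
      henergy (k := 2) (by norm_num)]
  refine (h.deriv_energy_three_le hρ (by norm_num) (hK ρ ⟨hρ.le, le_rfl⟩) hm).trans ?_
  refine mul_le_mul_of_nonneg_left ?_ (inv_nonneg.2 hρ0.le)
  have hF := energy_nonneg Φ 3 ρ
  calc 30 * (1 / 400) * energy Φ 3 ρ + 18 * (2 * e * r) * energy Φ 2 ρ +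
        6 * (1 / 400 : ℝ)⁻¹ * (2 * e * r) ^ 2 * energy Φ 1 ρ
      ≤ 1 / 6 * energy Φ 3 ρ + 18 * (2 * e * r) * (e * r) +
        6 * (1 / 400 : ℝ)⁻¹ * (2 * e * r) ^ 2 * (e * r) := by
        gcongr
        exacts [by norm_num, henergy (by norm_num), henergy (by norm_num)]
    _ = 1 / 6 * energy Φ 3 ρ + (36 * e * r ^ 2 + 9600 * e ^ 2 * r ^ 3) * e := by ring
    _ ≤ 1 / 6 * energy Φ 3 ρ +
        (36 * (1 / 400) * r ^ 3 + 9600 * (1 / 400) ^ 2 * r ^ 3) * e := by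
        gcongr; norm_num
    _ = 1 / 6 * energy Φ 3 ρ + 3 / 20 * e * r ^ 3 := by ring

lemma energy_le_rpow_one_half (h : S.IsDecayingSolution Φ) {e : ℝ}
    (he : ∀ k < 4, energy Φ k 1 ≤ e) (hsmall : e ≤ 1 / 400) {k : ℕ} (hk : k < 4) (hρ : 1 ≤ ρ)
    (hK : ∀ s ∈ Icc 1 ρ, ∀ y, ‖Φ s y‖ ^ 2 ≤ 1 / 400) :
    energy Φ k ρ ≤ e * ρ ^ (1 / 2 : ℝ) := by
  have he0 : 0 ≤ e := (energy_nonneg Φ 0 1).trans (he 0 (by norm_num))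
  have hr : ρ ^ (1 / 6 : ℝ) ≤ ρ ^ (1 / 2 : ℝ) :=
    Real.rpow_le_rpow_of_exponent_le hρ (by norm_num)
  obtain hk | rfl := Nat.lt_succ_iff_lt_or_eq.1 hk
  · exact (h.energy_le_rpow_one_sixth he hk hρ hK).trans (by gcongr)
  have hgrowth := le_of_deriv_le_rpow (a := 1 / 6) (b := 1 / 2) (by norm_num)
    (h.continuousOn_energy 3 ρ) (fun s hs ↦ (h.hasDerivAt_energy hs.1 3).differentiableAt)
    (fun s hs ↦ h.deriv_energy_three_le_rpow he hsmall hs.1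
      fun t ht ↦ hK t ⟨ht.1, ht.2.trans hs.2.le⟩) ⟨hρ, le_rfl⟩
  calc energy Φ 3 ρ
      ≤ energy Φ 3 1 * ρ ^ (1 / 6 : ℝ) + 3 / 20 * e / (1 / 2 - 1 / 6) *
          (ρ ^ (1 / 2 : ℝ) - ρ ^ (1 / 6 : ℝ)) := hgrowth
    _ ≤ e * ρ ^ (1 / 6 : ℝ) + e * (ρ ^ (1 / 2 : ℝ) - ρ ^ (1 / 6 : ℝ)) := by
        gcongr
        exacts [he 3 hk, by ring_nf; linarith]
    _ = e * ρ ^ (1 / 2 : ℝ) := by ring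

lemma norm_sq_iteratedDeriv_le_rpow (h : S.IsDecayingSolution Φ) {e : ℝ}
    (he : ∀ k < 4, energy Φ k 1 ≤ e) (hsmall : e ≤ 1 / 400) {k : ℕ} (hk : k < 3) (hρ : 1 ≤ ρ)
    (hK : ∀ s ∈ Icc 1 ρ, ∀ y, ‖Φ s y‖ ^ 2 ≤ 1 / 400) (y : ℝ) :
    ‖iteratedDeriv k (Φ ρ) y‖ ^ 2 ≤ 2 * e * ρ ^ (1 / 2 : ℝ) := by
  linarith [h.norm_sq_le_energy_add_energy hρ k y,
    h.energy_le_rpow_one_half he hsmall (k := k) (by lia) hρ hK,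
    h.energy_le_rpow_one_half he hsmall (k := k + 1) (by lia) hρ hK]

lemma hasDerivAt_correctedDensity (h : S.IsDecayingSolution Φ) (hρ : 1 < ρ) (y : ℝ) :
    HasDerivAt (S.correctedDensity Φ y)
      (ρ⁻¹ ^ 2 * (⟪S.transport (iteratedDeriv 1 (Φ ρ) y) + S.cubicTerm (Φ ρ) y,
          S.corrector (iteratedDeriv 1 (Φ ρ) y)⟫ +
        ⟪Φ ρ y, S.corrector (S.transport (iteratedDeriv 2 (Φ ρ) y) +
          iteratedDeriv 1 (S.cubicTerm (Φ ρ)) y)⟫ -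
        ⟪Φ ρ y, S.corrector (iteratedDeriv 1 (Φ ρ) y)⟫)) ρ := by
  have hρ0 : ρ ≠ 0 := (zero_lt_one.trans hρ).ne'
  have h₀ := h.hasDerivAt_time hρ 0 y
  have h₁ := h.hasDerivAt_time hρ 1 y
  rw [h.deriv_time_iteratedDeriv hρ] at h₀ h₁
  simp only [iteratedDeriv_zero, zero_add, one_add_one_eq_two] at h₀ h₁
  refine (h₀.norm_sq.add ((hasDerivAt_inv hρ0).mul
    (h₀.inner ℝ (S.corrector.hasFDerivAt.comp_hasDerivAt ρ h₁)))).congr_deriv ?_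
  have hflux := S.correctedDensity_flux_eq ρ⁻¹ (Φ ρ y) (iteratedDeriv 1 (Φ ρ) y)
    (iteratedDeriv 2 (Φ ρ) y) (iteratedDeriv 1 (S.cubicTerm (Φ ρ)) y)
  simp only [Function.comp_apply, cubicTerm] at hflux ⊢
  linear_combination hflux

lemma deriv_correctedDensity_le (h : S.IsDecayingSolution Φ) (hρ : 1 < ρ) {a y : ℝ}
    (hone : ‖Φ ρ y‖ ≤ 1) (ha : ∀ k < 3, ‖iteratedDeriv k (Φ ρ) y‖ ≤ a) :
    deriv (S.correctedDensity Φ y) ρ ≤ ρ⁻¹ ^ 2 * (7 * a ^ 2) := by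
  have ha₀ : ‖Φ ρ y‖ ≤ a := by simpa only [iteratedDeriv_zero] using ha 0 (by norm_num)
  have ha₁ := ha 1 (by norm_num)
  have htransport {k : ℕ} (hk : k < 3) : ‖S.transport (iteratedDeriv k (Φ ρ) y)‖ ≤ a :=
    (S.norm_transport_le _).trans (ha k hk)
  have hcubic : ‖S.cubicTerm (Φ ρ) y‖ ≤ a :=
    (norm_cubicTerm_le (Φ ρ) y).trans <|
      (pow_le_of_le_one (norm_nonneg _) hone three_ne_zero).trans ha₀
  have hcubic₁ : ‖iteratedDeriv 1 (S.cubicTerm (Φ ρ)) y‖ ≤ 3 * a := calc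
    _ ≤ 3 * ‖Φ ρ y‖ ^ 2 * ‖iteratedDeriv 1 (Φ ρ) y‖ :=
      norm_iteratedDeriv_one_cubicTerm_le (h.contDiff_slice hρ.le 1) y
    _ ≤ 3 * 1 ^ 2 * a := by gcongr
    _ = 3 * a := by norm_num
  rw [(h.hasDerivAt_correctedDensity hρ y).deriv, inner_add_left, map_add, inner_add_right]
  gcongr
  linarith [(abs_le.1 (S.abs_inner_corrector_le (htransport (k := 1) (by norm_num)) ha₁)).2,
    (abs_le.1 (S.abs_inner_corrector_le hcubic ha₁)).2,
    (abs_le.1 (S.abs_inner_corrector_le ha₀ (htransport (k := 2) (by norm_num)))).2,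
    (abs_le.1 (S.abs_inner_corrector_le ha₀ hcubic₁)).2,
    (abs_le.1 (S.abs_inner_corrector_le ha₀ ha₁)).1]

lemma continuousOn_correctedDensity (h : S.IsDecayingSolution Φ) (y R : ℝ) :
    ContinuousOn (S.correctedDensity Φ y) (Icc 1 R) := by
  have hΦ (k : ℕ) : ContinuousOn (fun s ↦ iteratedDeriv k (Φ s) y) (Icc 1 R) :=
    ((h.smooth.iteratedDeriv_slice k).continuousOn_time y).mono Icc_subset_Ici_self
  have hinv : ContinuousOn (fun s : ℝ ↦ s⁻¹) (Icc 1 R) :=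
    continuousOn_inv₀.mono fun s hs ↦ (zero_lt_one.trans_le hs.1).ne'
  have h₀ := hΦ 0
  simp only [iteratedDeriv_zero] at h₀
  exact (h₀.norm.pow 2).add
    (hinv.mul (h₀.inner (S.corrector.continuous.comp_continuousOn (hΦ 1))))

lemma correctedDensity_le (h : S.IsDecayingSolution Φ) {e : ℝ}
    (he : ∀ k < 4, energy Φ k 1 ≤ e) (hsmall : e ≤ 1 / 400) (hρ : 1 ≤ ρ)
    (hK : ∀ s ∈ Icc 1 ρ, ∀ y, ‖Φ s y‖ ^ 2 ≤ 1 / 400) (y : ℝ) :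
    S.correctedDensity Φ y ρ ≤ S.correctedDensity Φ y 1 + 28 * e := by
  have he0 : 0 ≤ e := (energy_nonneg Φ 0 1).trans (he 0 (by norm_num))
  have hderiv : ∀ s ∈ Ioo 1 ρ, deriv (S.correctedDensity Φ y) s ≤
      s⁻¹ * (0 * S.correctedDensity Φ y s + 14 * e * s ^ (-1 / 2 : ℝ)) := by
    intro s hs
    have hs0 : 0 < s := zero_lt_one.trans hs.1
    have hKs : ∀ t ∈ Icc 1 s, ∀ y, ‖Φ t y‖ ^ 2 ≤ 1 / 400 :=
      fun t ht ↦ hK t ⟨ht.1, ht.2.trans hs.2.le⟩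
    have hone : ‖Φ s y‖ ≤ 1 := by nlinarith [hKs s ⟨hs.1.le, le_rfl⟩ y]
    have hnorm : ∀ k < 3, ‖iteratedDeriv k (Φ s) y‖ ≤ √(2 * e * s ^ (1 / 2 : ℝ)) :=
      fun k hk ↦ Real.le_sqrt_of_sq_le
        (h.norm_sq_iteratedDeriv_le_rpow he hsmall hk hs.1.le hKs y)
    have hpow : s ^ (-1 / 2 : ℝ) = s⁻¹ * s ^ (1 / 2 : ℝ) := by
      rw [← Real.rpow_neg_one, ← Real.rpow_add hs0]; norm_num
    refine (h.deriv_correctedDensity_le hs.1 hone hnorm).trans_eq ?_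
    rw [Real.sq_sqrt (by positivity), hpow]
    ring
  have hgrowth := le_of_deriv_le_rpow (by norm_num) (h.continuousOn_correctedDensity y ρ)
    (fun s hs ↦ (h.hasDerivAt_correctedDensity hs.1 y).differentiableAt) hderiv ⟨hρ, le_rfl⟩
  have hpos : 0 ≤ e * ρ ^ (-1 / 2 : ℝ) := by positivity
  rw [Real.rpow_zero, sub_zero] at hgrowth
  linarith

lemma abs_correctedDensity_sub_norm_sq_le (h : S.IsDecayingSolution Φ) {e : ℝ}
    (he : ∀ k < 4, energy Φ k 1 ≤ e) (hsmall : e ≤ 1 / 400) (hρ : 1 ≤ ρ)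
    (hK : ∀ s ∈ Icc 1 ρ, ∀ y, ‖Φ s y‖ ^ 2 ≤ 1 / 400) (y : ℝ) :
    |S.correctedDensity Φ y ρ - ‖Φ ρ y‖ ^ 2| ≤ 2 * e := by
  have hρ0 : 0 < ρ := zero_lt_one.trans_le hρ
  have he0 : 0 ≤ e := (energy_nonneg Φ 0 1).trans (he 0 (by norm_num))
  have hnorm {k : ℕ} (hk : k < 3) : ‖iteratedDeriv k (Φ ρ) y‖ ≤ √(2 * e * ρ ^ (1 / 2 : ℝ)) :=
    Real.le_sqrt_of_sq_le (h.norm_sq_iteratedDeriv_le_rpow he hsmall hk hρ hK y)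
  rw [correctedDensity, add_sub_cancel_left, abs_mul, abs_of_pos (inv_pos.2 hρ0)]
  calc ρ⁻¹ * |⟪Φ ρ y, S.corrector (iteratedDeriv 1 (Φ ρ) y)⟫|
      ≤ ρ⁻¹ * (√(2 * e * ρ ^ (1 / 2 : ℝ)) * √(2 * e * ρ ^ (1 / 2 : ℝ))) := by
        gcongr
        exact S.abs_inner_corrector_le
          (by simpa only [iteratedDeriv_zero] using hnorm (k := 0) (by norm_num))
          (hnorm (by norm_num))
    _ = ρ⁻¹ * (2 * e * ρ ^ (1 / 2 : ℝ)) := by rw [Real.mul_self_sqrt (by positivity)]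
    _ ≤ ρ⁻¹ * (2 * e * ρ) := by gcongr; exact Real.rpow_le_self_of_one_le hρ (by norm_num)
    _ = 2 * e := by field_simp

lemma norm_sq_le_two_mul_of_energy_one_le (h : S.IsDecayingSolution Φ) {e : ℝ}
    (he : ∀ k < 4, energy Φ k 1 ≤ e) (y : ℝ) : ‖Φ 1 y‖ ^ 2 ≤ 2 * e := by
  have hsup := h.norm_sq_le_energy_add_energy le_rfl 0 y
  rw [iteratedDeriv_zero] at hsup
  linarith [he 0 (by norm_num), he 1 (by norm_num)]

lemma norm_sq_le_of_forall_norm_sq_le (h : S.IsDecayingSolution Φ) {e : ℝ}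
    (he : ∀ k < 4, energy Φ k 1 ≤ e) (hsmall : e ≤ 1 / 400) (hρ : 1 ≤ ρ)
    (hK : ∀ s ∈ Icc 1 ρ, ∀ y, ‖Φ s y‖ ^ 2 ≤ 1 / 400) (y : ℝ) : ‖Φ ρ y‖ ^ 2 ≤ 34 * e := by
  have hinit := h.abs_correctedDensity_sub_norm_sq_le he hsmall le_rfl
    (fun s hs ↦ hK s ⟨hs.1, hs.2.trans hρ⟩) y
  linarith [h.norm_sq_le_two_mul_of_energy_one_le he y, (abs_le.1 hinit).2,
    (abs_le.1 (h.abs_correctedDensity_sub_norm_sq_le he hsmall hρ hK y)).1,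
    h.correctedDensity_le he hsmall hρ hK y]

lemma exists_norm_sq_sub_le (h : S.IsDecayingSolution Φ) (R : ℝ) :
    ∃ L > 0, ∀ s t, 1 ≤ s → s ≤ t → t ≤ R → ∀ y,
      ‖Φ t y‖ ^ 2 - ‖Φ s y‖ ^ 2 ≤ L * (t - s) := by
  obtain ⟨C, hC⟩ := h.decay 0 R
  obtain ⟨D, hD⟩ := h.decay_deriv_time 0 R
  simp only [iteratedDeriv_zero] at hC hD
  refine ⟨2 * (|C| * |D|) + 1, by positivity, fun s t hs hst ht y ↦ ?_⟩
  have hderiv {r : ℝ} (hr : 1 < r) : HasDerivAt (fun r ↦ ‖Φ r y‖ ^ 2)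
      (2 * ⟪Φ r y, deriv (fun s ↦ Φ s y) r⟫) r := by
    simpa only [iteratedDeriv_zero] using (h.hasDerivAt_time hr 0 y).norm_sq
  refine (convex_Icc 1 R).image_sub_le_mul_sub_of_deriv_le
    (f := fun r ↦ ‖Φ r y‖ ^ 2)
    (((h.smooth.continuousOn_time y).mono Icc_subset_Ici_self).norm.pow 2) ?_ ?_
    s ⟨hs, hst.trans ht⟩ t ⟨hs.trans hst, ht⟩ hst
  · rw [interior_Icc]
    exact fun r hr ↦ (hderiv hr.1).differentiableAt.differentiableWithinAt
  · rw [interior_Icc]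
    intro r hr
    rw [(hderiv hr.1).deriv]
    have hΦ : ‖Φ r y‖ ≤ |C| :=
      (norm_le_of_decay (hC r ⟨hr.1.le, hr.2.le⟩) y).trans (le_abs_self C)
    have hΦ' : ‖deriv (fun s ↦ Φ s y) r‖ ≤ |D| :=
      (norm_le_of_decay (hD r ⟨hr.1, hr.2.le⟩) y).trans (le_abs_self D)
    linarith [(real_inner_le_norm (Φ r y) (deriv (fun s ↦ Φ s y) r)).trans
      (mul_le_mul hΦ hΦ' (norm_nonneg _) (abs_nonneg C))]

lemma norm_sq_le (h : S.IsDecayingSolution Φ) {e : ℝ} (he : ∀ k < 4, energy Φ k 1 ≤ e)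
    (hsmall : 34 * e < 1 / 400) (hρ : 1 ≤ ρ) (y : ℝ) : ‖Φ ρ y‖ ^ 2 ≤ 34 * e := by
  have he0 : 0 ≤ e := (energy_nonneg Φ 0 1).trans (he 0 (by norm_num))
  obtain ⟨L, hL0, hL⟩ := h.exists_norm_sq_sub_le ρ
  exact forall_le_of_bootstrap (f := fun s y ↦ ‖Φ s y‖ ^ 2) hsmall hL0 hL
    (fun y ↦ (h.norm_sq_le_two_mul_of_energy_one_le he y).trans (by linarith))
    (fun t ht hK ↦ h.norm_sq_le_of_forall_norm_sq_le he (by linarith) ht.1 hK) ⟨hρ, le_rfl⟩ y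

end IsDecayingSolution

end CubicDiracSystem

open CubicDiracSystem in
theorem interior_a_priori_bound_general :
    ∃ ε > (0 : ℝ), ∃ C > (0 : ℝ), ∀ {E : Type*} [NormedAddCommGroup E] [InnerProductSpace ℝ E]
      (S : CubicDiracSystem E) (Φ : ℝ → ℝ → E), S.IsDecayingSolution Φ →
      ∀ δ ≤ ε, 0 ≤ δ → (∀ k < 4, energy Φ k 1 ≤ δ ^ 2) →
      ∀ ρ ≥ 1, ∀ y, ‖Φ ρ y‖ ≤ C * δ := by
  refine ⟨1 / 400, by norm_num, 6, by norm_num, fun S Φ h δ hδ hδ0 hE ρ hρ y ↦ ?_⟩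
  have hsq : δ ^ 2 ≤ (1 / 400) ^ 2 := by gcongr
  refine le_of_sq_le_sq ?_ (by positivity)
  linarith [h.norm_sq_le hE (by linarith) hρ y, sq_nonneg δ]

end Systems

section Thirring

open scoped ComplexConjugate RealInnerProductSpace
open Set

/-- Pairs `(U, V)` of complex numbers with the Euclidean norm. -/
abbrev Spinor : Type := WithLp 2 (ℂ × ℂ)

namespace Spinor

lemma inner_toLp (a b a' b' : ℂ) :
    ⟪(WithLp.toLp 2 (a, b) : Spinor), WithLp.toLp 2 (a', b')⟫ =
      a.re * a'.re + a.im * a'.im + (b.re * b'.re + b.im * b'.im) := by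
  simp only [WithLp.prod_inner_apply, Complex.inner, Complex.mul_re, Complex.conj_re,
    Complex.conj_im]
  ring

lemma norm_sq_toLp (a b : ℂ) : ‖(WithLp.toLp 2 (a, b) : Spinor)‖ ^ 2 = ‖a‖ ^ 2 + ‖b‖ ^ 2 :=
  WithLp.prod_norm_sq_eq_of_L2 _

lemma norm_toLp_le (a b : ℂ) : ‖(WithLp.toLp 2 (a, b) : Spinor)‖ ≤ ‖a‖ + ‖b‖ := by
  refine le_of_sq_le_sq ?_ (by positivity)
  rw [norm_sq_toLp]
  exact pow_add_pow_le (norm_nonneg a) (norm_nonneg b) two_ne_zero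

lemma hasDerivAt_toLp {f g : ℝ → ℂ} {f' g' : ℂ} {t : ℝ} (hf : HasDerivAt f f' t)
    (hg : HasDerivAt g g' t) :
    HasDerivAt (fun s ↦ (WithLp.toLp 2 (f s, g s) : Spinor)) (WithLp.toLp 2 (f', g')) t :=
  (WithLp.prodContinuousLinearEquiv 2 ℝ ℂ ℂ).symm.toContinuousLinearMap.hasFDerivAt.comp_hasDerivAt
    t (hf.prodMk hg)

/-- The real-linear endomorphism of spinors with components `f` and `g`. -/
def ofComponents (f g : Spinor →L[ℝ] ℂ) : Spinor →L[ℝ] Spinor :=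
  (WithLp.prodContinuousLinearEquiv 2 ℝ ℂ ℂ).symm ∘L f.prod g

@[simp]
lemma ofComponents_apply (f g : Spinor →L[ℝ] ℂ) (x : Spinor) :
    ofComponents f g x = WithLp.toLp 2 (f x, g x) := rfl

/-- Componentwise multiplication of spinors. -/
def mul : Spinor →L[ℝ] Spinor →L[ℝ] Spinor :=
  let e : Spinor →L[ℝ] ℂ × ℂ := WithLp.prodContinuousLinearEquiv 2 ℝ ℂ ℂ
  .compL ℝ Spinor (ℂ × ℂ) Spinor (WithLp.prodContinuousLinearEquiv 2 ℝ ℂ ℂ).symm ∘L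
    (ContinuousLinearMap.mul ℝ (ℂ × ℂ)).bilinearComp e e

/-- The trilinear form of the cubic terms `i |V|² U` and `i |U|² V`. -/
def thirringCubic : Spinor →L[ℝ] Spinor →L[ℝ] Spinor →L[ℝ] Spinor :=
  let fst := WithLp.fstL 2 ℝ ℂ ℂ
  let snd := WithLp.sndL 2 ℝ ℂ ℂ
  let conjCLM : ℂ →L[ℝ] ℂ := Complex.conjCLE
  .compL ℝ Spinor Spinor (Spinor →L[ℝ] Spinor) mul ∘L mul.bilinearComp
    (ofComponents (Complex.I • conjCLM ∘L snd) (Complex.I • conjCLM ∘L fst))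
    (ofComponents snd fst)

lemma thirringCubic_toLp (a b a' b' a'' b'' : ℂ) :
    thirringCubic (.toLp 2 (a, b)) (.toLp 2 (a', b')) (.toLp 2 (a'', b'')) =
      .toLp 2 (Complex.I * conj b * b' * a'', Complex.I * conj a * a' * b'') := rfl

lemma norm_thirringCubic_le (x y z : Spinor) : ‖thirringCubic x y z‖ ≤ ‖x‖ * ‖y‖ * ‖z‖ := by
  obtain ⟨⟨a, b⟩⟩ := x
  obtain ⟨⟨a', b'⟩⟩ := y
  obtain ⟨⟨a'', b''⟩⟩ := z
  refine le_of_sq_le_sq ?_ (by positivity)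
  simp only [thirringCubic_toLp, norm_sq_toLp, mul_pow, norm_mul, Complex.norm_I, RCLike.norm_conj,
    one_mul]
  have hrest : 0 ≤ ‖b‖ ^ 2 * ‖b'‖ ^ 2 * ‖b''‖ ^ 2 + ‖a‖ ^ 2 * ‖a'‖ ^ 2 * ‖a''‖ ^ 2 +
      (‖a‖ ^ 2 * ‖b'‖ ^ 2 + ‖b‖ ^ 2 * ‖a'‖ ^ 2) * (‖a''‖ ^ 2 + ‖b''‖ ^ 2) := by positivity
  linarith

end Spinor

open Spinor

/-- The transformed Thirring system, with `A = -σ₃`, `J = i σ₁` and corrector `B = σ₂` in terms of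
the Pauli matrices. -/
def thirringSystem : CubicDiracSystem Spinor where
  transport := ofComponents (-WithLp.fstL 2 ℝ ℂ ℂ) (WithLp.sndL 2 ℝ ℂ ℂ)
  mass := ofComponents (Complex.I • WithLp.sndL 2 ℝ ℂ ℂ) (Complex.I • WithLp.fstL 2 ℝ ℂ ℂ)
  corrector := ofComponents (-Complex.I • WithLp.sndL 2 ℝ ℂ ℂ) (Complex.I • WithLp.fstL 2 ℝ ℂ ℂ)
  cubic := thirringCubic
  inner_transport_left := by
    rintro ⟨⟨a, b⟩⟩ ⟨⟨a', b'⟩⟩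
    simp [inner_toLp, -WithLp.prod_inner_apply]
  inner_mass_left := by
    rintro ⟨⟨a, b⟩⟩ ⟨⟨a', b'⟩⟩
    simp [inner_toLp, -WithLp.prod_inner_apply]
  corrector_mass := by
    rintro ⟨⟨a, b⟩⟩
    refine WithLp.ofLp_injective 2 (Prod.ext ?_ ?_)
    all_goals
      simp only [ofComponents_apply, smul_apply, neg_apply, WithLp.fstL_apply, WithLp.sndL_apply,
        WithLp.toLp_fst, WithLp.toLp_snd, WithLp.ofLp_sub, WithLp.ofLp_smul, Prod.smul_mk,
        Prod.mk_sub_mk, smul_eq_mul, Complex.real_smul, Complex.ofReal_ofNat]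
    · linear_combination -2 * a * Complex.I_sq
    · linear_combination 2 * b * Complex.I_sq
  inner_cubic_self := by
    rintro ⟨⟨a, b⟩⟩
    simp only [thirringCubic_toLp, inner_toLp, Complex.mul_re, Complex.mul_im, Complex.I_re,
      Complex.I_im, Complex.conj_re, Complex.conj_im]
    ring
  norm_transport_le x := by simp [WithLp.prod_norm_eq_of_L2]
  norm_corrector_le x := by simp [WithLp.prod_norm_eq_of_L2, add_comm]
  norm_cubic_le := norm_thirringCubic_le

variable {U V : ℝ → ℝ → ℂ} {ρ : ℝ}

/-- The spinor field with components `U` and `V`. -/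
def spinorField (U V : ℝ → ℝ → ℂ) (ρ y : ℝ) : Spinor := WithLp.toLp 2 (U ρ y, V ρ y)

lemma smoothOnHalfPlane_spinorField (hU : SmoothOnHalfPlane U) (hV : SmoothOnHalfPlane V) :
    SmoothOnHalfPlane (spinorField U V) :=
  (WithLp.prodContinuousLinearEquiv 2 ℝ ℂ ℂ).symm.contDiff.comp_contDiffOn
    (ContDiffOn.prodMk hU hV)

lemma iteratedDeriv_spinorField (hU : SmoothOnHalfPlane U) (hV : SmoothOnHalfPlane V)
    (hρ : 1 ≤ ρ) (k : ℕ) :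
    iteratedDeriv k (spinorField U V ρ) =
      spinorField (fun s ↦ iteratedDeriv k (U s)) (fun s ↦ iteratedDeriv k (V s)) ρ := by
  induction k with
  | zero => simp only [iteratedDeriv_zero]
  | succ k ih =>
    rw [iteratedDeriv_succ, ih]
    exact funext fun y ↦ (hasDerivAt_toLp (hU.hasDerivAt_iteratedDeriv hρ k y)
      (hV.hasDerivAt_iteratedDeriv hρ k y)).deriv

lemma py_iterate (u : ℝ → ℝ → ℂ) (k : ℕ) : py^[k] u = fun ρ ↦ iteratedDeriv k (u ρ) := by
  induction k with
  | zero => simp only [Function.iterate_zero, id_eq, iteratedDeriv_zero]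
  | succ k ih =>
    rw [Function.iterate_succ_apply', ih]
    simp only [iteratedDeriv_succ]
    rfl

lemma SchwartzLocUnif.decay {u : ℝ → ℝ → ℂ} (hu : SchwartzLocUnif u) (k : ℕ) (R : ℝ) :
    ∃ C, ∀ ρ ∈ Icc 1 R, ∀ y, (1 + y ^ 2) * ‖iteratedDeriv k (u ρ) y‖ ≤ C := by
  obtain ⟨C₀, h₀⟩ := hu 0 k 0 R
  obtain ⟨C₂, h₂⟩ := hu 0 k 2 R
  refine ⟨C₀ + C₂, fun ρ hρ y ↦ ?_⟩
  simp only [Function.iterate_zero, id_eq, py_iterate, pow_zero, one_mul, sq_abs] at h₀ h₂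
  rw [add_mul, one_mul]
  exact add_le_add (h₀ ρ hρ y) (h₂ ρ hρ y)

lemma deriv_time_spinorField (hU : SmoothOnHalfPlane U) (hV : SmoothOnHalfPlane V)
    (h : TransThirring U V) (hρ : 1 < ρ) (y : ℝ) :
    deriv (fun s ↦ spinorField U V s y) ρ =
      ρ⁻¹ • (thirringSystem.transport (deriv (spinorField U V ρ) y) +
        thirringSystem.cubicTerm (spinorField U V ρ) y) +
      thirringSystem.mass (spinorField U V ρ y) := by
  obtain ⟨hpU, hpV⟩ := h ρ y hρ.le
  have hdy {u : ℝ → ℝ → ℂ} (hu : SmoothOnHalfPlane u) : HasDerivAt (u ρ) (py u ρ y) y :=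
    ((hu.contDiff_slice hρ.le).differentiable (by simp) y).hasDerivAt
  have hdρ {u : ℝ → ℝ → ℂ} (hu : SmoothOnHalfPlane u) : HasDerivAt (u · y) (pρ u ρ y) ρ :=
    (hu.differentiableAt_time hρ y).hasDerivAt
  rw [show deriv (spinorField U V ρ) y = _ from (hasDerivAt_toLp (hdy hU) (hdy hV)).deriv]
  refine (hasDerivAt_toLp (hdρ hU) (hdρ hV)).deriv.trans <|
    WithLp.ofLp_injective 2 (Prod.ext ?_ ?_)
  · calc pρ U ρ y = _ := eq_sub_of_add_eq hpU
      _ = (ρ⁻¹ : ℝ) • (-py U ρ y + Complex.I * conj (V ρ y) * V ρ y * U ρ y) +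
          Complex.I * V ρ y := by
        rw [mul_assoc Complex.I (conj _), Complex.conj_mul', Complex.real_smul]
        push_cast
        ring
  · calc pρ V ρ y = _ := eq_add_of_sub_eq hpV
      _ = (ρ⁻¹ : ℝ) • (py V ρ y + Complex.I * conj (U ρ y) * U ρ y * V ρ y) +
          Complex.I * U ρ y := by
        rw [mul_assoc Complex.I (conj _), Complex.conj_mul', Complex.real_smul]
        push_cast
        ring

lemma isDecayingSolution_spinorField (hU : SmoothOnHalfPlane U) (hV : SmoothOnHalfPlane V)
    (hUs : SchwartzLocUnif U) (hVs : SchwartzLocUnif V) (h : TransThirring U V) :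
    thirringSystem.IsDecayingSolution (spinorField U V) where
  smooth := smoothOnHalfPlane_spinorField hU hV
  decay k R := by
    obtain ⟨C, hC⟩ := hUs.decay k R
    obtain ⟨D, hD⟩ := hVs.decay k R
    refine ⟨C + D, fun ρ hρ y ↦ ?_⟩
    rw [iteratedDeriv_spinorField hU hV hρ.1]
    calc _ ≤ (1 + y ^ 2) * (‖iteratedDeriv k (U ρ) y‖ + ‖iteratedDeriv k (V ρ) y‖) := by
          gcongr; exact norm_toLp_le _ _
      _ ≤ C + D := by rw [mul_add]; exact add_le_add (hC ρ hρ y) (hD ρ hρ y)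
  equation hρ y := deriv_time_spinorField hU hV h hρ y

lemma Eint_nonneg (U V : ℝ → ℝ → ℂ) (ρ : ℝ) : 0 ≤ Eint U V ρ := by
  unfold Eint
  positivity

lemma energy_spinorField (hU : SmoothOnHalfPlane U) (hV : SmoothOnHalfPlane V)
    (hUs : SchwartzLocUnif U) (hVs : SchwartzLocUnif V) (hρ : 1 ≤ ρ) (k : ℕ) :
    energy (spinorField U V) k ρ = energy U k ρ + energy V k ρ := by
  have hint {u : ℝ → ℝ → ℂ} (hu : SmoothOnHalfPlane u) (hus : SchwartzLocUnif u) :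
      Integrable fun y ↦ ‖iteratedDeriv k (u ρ) y‖ ^ 2 :=
    have ⟨_, hC⟩ := hus.decay k ρ
    (memLp_two_of_decay ((hu.iteratedDeriv_slice k).contDiff_slice hρ).continuous
      (hC ρ ⟨hρ, le_rfl⟩)).integrable_norm_pow two_ne_zero
  simp only [energy, iteratedDeriv_spinorField hU hV hρ]
  rw [← integral_add (hint hU hUs) (hint hV hVs)]
  exact integral_congr_ae (ae_of_all _ fun y ↦ norm_sq_toLp _ _)

lemma energy_add_energy_le_Eint_sq (U V : ℝ → ℝ → ℂ) (ρ : ℝ) {k : ℕ} (hk : k < 4) :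
    energy U k ρ + energy V k ρ ≤ Eint U V ρ ^ 2 := by
  have hle : √(energy U k ρ) + √(energy V k ρ) ≤ Eint U V ρ := by
    simp only [energy, iteratedDeriv_eq_iterate]
    exact Finset.single_le_sum
      (f := fun k ↦ √(∫ y, ‖deriv^[k] (U ρ) y‖ ^ 2) + √(∫ y, ‖deriv^[k] (V ρ) y‖ ^ 2))
      (fun _ _ ↦ by positivity) (Finset.mem_range.2 hk)
  calc energy U k ρ + energy V k ρ
      = √(energy U k ρ) ^ 2 + √(energy V k ρ) ^ 2 := by
        rw [Real.sq_sqrt (energy_nonneg U k ρ), Real.sq_sqrt (energy_nonneg V k ρ)]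
    _ ≤ (√(energy U k ρ) + √(energy V k ρ)) ^ 2 :=
        pow_add_pow_le (Real.sqrt_nonneg _) (Real.sqrt_nonneg _) two_ne_zero
    _ ≤ Eint U V ρ ^ 2 := by gcongr

lemma Mfun_le_of_norm_spinorField_le {B : ℝ} (h : ∀ y, ‖spinorField U V ρ y‖ ≤ B) :
    Mfun U V ρ ≤ B :=
  ciSup_le fun y ↦ (WithLp.prod_norm_eq_of_L2 (spinorField U V ρ y)).symm.trans_le (h y)

end Thirring

/-- interior a priori bound: if 𝓔_int(1) is small, then
sup_{ρ ≥ 1} M(ρ) ≲ 𝓔_int(1). -/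
theorem interior_a_priori_bound :
    ∃ ε > (0 : ℝ), ∃ C > (0 : ℝ), ∀ U V : ℝ → ℝ → ℂ,
      ContDiffOn ℝ (⊤ : ℕ∞) (fun p : ℝ × ℝ => U p.1 p.2) {p : ℝ × ℝ | 1 ≤ p.1} →
      ContDiffOn ℝ (⊤ : ℕ∞) (fun p : ℝ × ℝ => V p.1 p.2) {p : ℝ × ℝ | 1 ≤ p.1} →
      SchwartzLocUnif U → SchwartzLocUnif V →
      TransThirring U V →
      Eint U V 1 ≤ ε →
      ∀ ρ : ℝ, 1 ≤ ρ → Mfun U V ρ ≤ C * Eint U V 1 := by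
  obtain ⟨ε, hε, C, hC, hbound⟩ := interior_a_priori_bound_general
  refine ⟨ε, hε, C, hC, fun U V hU hV hUs hVs h hE ρ hρ ↦ ?_⟩
  refine Mfun_le_of_norm_spinorField_le <| hbound thirringSystem _
    (isDecayingSolution_spinorField hU hV hUs hVs h) _ hE (Eint_nonneg U V 1)
    (fun k hk ↦ ?_) ρ hρ
  exact (energy_spinorField hU hV hUs hVs le_rfl k).trans_le
    (energy_add_energy_le_Eint_sq U V 1 hk)
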